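/- Bias–variance of standard subsampled OLS under approximate leverage score sampling (Corollary 4.5): There exist absolute constants C > 0 and C' > 0 such that the following holds. Let n ≥ p ≥ 1 with n ≥ 3, let X ∈ ℝ^{n×p} have Xᵀ X invertible and satisfy the row-norm condition with exponent α > 0, let y ∈ ℝⁿ, let θ₋ ∈ [1/2, 1] and θ₊ ≥ 1, and let π be a sampling distribution with ℓ_i(X)/(p·θ₊) ≤ π i ≤ ℓ_i(X)/(p·θ₋) for every i. For every δ with 0 < δ ≤ n^{−(3+α)} and every m with m ≥ C · θ₊ · p · log(p/δ), there exists an event ζ ⊆ Ω with P(ζ) ≥ 1 − δ such that (S(ω) X)ᵀ S(ω) X is invertible on ζ and the (non-debiased) subsampled OLS estimator satisfies Bias_ζ(β̃) ≤ ε² · ‖r‖² and |Var_ζ(β̃) − Δ(X)| ≤ ε · ‖r‖², where ε = C' · ((log n / log log n) · √(θ₊³ p³/m³) + ε_θ · θ₊ · p/m) and ε_θ = max{θ₋⁻¹ − 1, 1 − θ₊⁻¹}. -/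

import Mathlib

/-!
Write `(XᵀX)⁻¹ = T Tᵀ`, `aᵢ = Tᵀ xᵢ / √πᵢ` and `ρᵢ = rᵢ / √πᵢ`. Then `𝔼 a aᵀ = 1`, `𝔼 ρ a = 0`,
`‖aᵢ‖² = ℓᵢ / πᵢ ≤ L := p θ₊`, and in terms of the sampled Gram matrix `W = m⁻¹ ∑ₛ a aᵀ` and the
score `g = m⁻¹ ∑ₛ ρ a` the estimator is `β̃ = β_OLS + T W⁻¹ g`, while
`L(β_OLS + T z) = ‖r‖² + ‖z‖²`. So the claim concerns the conditional mean and the conditional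
second moment of `W⁻¹ g` on the event `ζ` that all eigenvalues of `W` are at least `1/4`
(`goodSet`), which is what `whitened` provides.

* The complement of `ζ` is controlled through the moment `𝔼 tr exp (-t W)`. Replacing one sample is
  a rank-one change of the exponent, and the resulting differential inequality in `t` integrates
  (Grönwall) to a bound with only the dimension as prefactor; hence `m ≥ 20 L log (p/δ)` suffices.
  Resampling one index changes the trace exponential by a bounded factor, so polynomial weights such
  as `‖g‖²` restricted to the complement of `ζ` are exponentially small as well.
* With `D = W - 1`, expand `W⁻¹ g = g - D g + (…)`, the last term being quadratic in `D`. Here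
  `𝔼 g = 0` and `𝔼 ‖g‖² = Δ(X)` exactly. Only the diagonal terms of the double sum `D g` have
  nonzero mean, namely `m⁻¹ 𝔼 (‖a‖² - 1) ρ a`; since `𝔼 ρ a = 0` it equals
  `m⁻¹ 𝔼 (‖a‖² - p) ρ a`, which `|‖a‖² - p| ≤ p θ₊ ε_θ` makes small.
* Second moments such as `𝔼 ‖D g‖² ≤ 8 (L/m)² ‖r‖²` follow from the orthogonality of the
  off-diagonal terms and carry no logarithm. By Cauchy–Schwarz the quadratic terms contribute
  `O((L/m)^{3/2} ‖r‖)` to the mean of `W⁻¹ g` and, with the cross terms against `g`,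
  `O((L/m)^{3/2} ‖r‖²)` to its second moment.

The factor `log n / log log n` is at least `1` for `n ≥ 3`, so it only weakens the bound.
-/

open Matrix Finset

noncomputable section

/-- Probability of the i.i.d. sample `ω` of `m` draws from the sampling
distribution `π` (pmf of the product measure on `Ω = Fin m → Fin n`). -/
def samplingP {n : ℕ} (π : Fin n → ℝ) {m : ℕ} (ω : Fin m → Fin n) : ℝ :=
  ∏ s, π (ω s)

/-- The sampling matrix `S(ω) ∈ ℝ^{m×n}` with `S(ω)_{s,j} = 1/√(m π_{ω s})` if
`j = ω s` and `0` otherwise. -/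
def samplingS {n : ℕ} (π : Fin n → ℝ) {m : ℕ} (ω : Fin m → Fin n) :
    Matrix (Fin m) (Fin n) ℝ :=
  Matrix.of fun s j => if j = ω s then 1 / Real.sqrt (m * π (ω s)) else 0

/-- The `i`-th leverage score `ℓ_i(X) = x_iᵀ (Xᵀ X)⁻¹ x_i`. -/
def lev {n p : ℕ} (X : Matrix (Fin n) (Fin p) ℝ) (i : Fin n) : ℝ :=
  X i ⬝ᵥ ((Xᵀ * X)⁻¹ *ᵥ X i)

/-- Maximum importance sampling approximation factor
`θ_max(X) = max_i ℓ_i(X)/(p π_i)`. -/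
def thetaMax {n p : ℕ} (X : Matrix (Fin n) (Fin p) ℝ) (π : Fin n → ℝ) : ℝ :=
  ⨆ i, lev X i / (p * π i)

/-- Probability of an event `ζ` relative to the pmf `P`. -/
def eventProb {Ω : Type*} (P : Ω → ℝ) (ζ : Finset Ω) : ℝ :=
  ∑ ω ∈ ζ, P ω

/-- Conditional expectation `E_ζ[f] = P(ζ)⁻¹ ∑_{ω ∈ ζ} P(ω) f(ω)`. -/
def condExp {Ω V : Type*} [AddCommMonoid V] [Module ℝ V]
    (P : Ω → ℝ) (ζ : Finset Ω) (f : Ω → V) : V :=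
  (eventProb P ζ)⁻¹ • ∑ ω ∈ ζ, P ω • f ω

/-- Frobenius norm `‖A‖_F = √(trace (Aᵀ A))`. -/
def frobNorm {k l : ℕ} (A : Matrix (Fin k) (Fin l) ℝ) : ℝ :=
  Real.sqrt ((Aᵀ * A).trace)

/-- Loewner order: `A ⪯ B` iff `B − A` is positive semidefinite. -/
def loewnerLE {k : ℕ} (A B : Matrix (Fin k) (Fin k) ℝ) : Prop :=
  (B - A).PosSemidef

/-- Least-squares loss `L(β) = ‖y − X β‖²`. -/
def lossL {n p : ℕ} (X : Matrix (Fin n) (Fin p) ℝ) (y : Fin n → ℝ)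
    (β : Fin p → ℝ) : ℝ :=
  (y - X *ᵥ β) ⬝ᵥ (y - X *ᵥ β)

/-- OLS solution `β_OLS = (Xᵀ X)⁻¹ Xᵀ y`. -/
def olsSol {n p : ℕ} (X : Matrix (Fin n) (Fin p) ℝ) (y : Fin n → ℝ) : Fin p → ℝ :=
  (Xᵀ * X)⁻¹ *ᵥ (Xᵀ *ᵥ y)

/-- OLS residual `r = y − X β_OLS`. -/
def olsResid {n p : ℕ} (X : Matrix (Fin n) (Fin p) ℝ) (y : Fin n → ℝ) : Fin n → ℝ :=
  y - X *ᵥ olsSol X y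

/-- Subsampled OLS estimator `β̃(ω) = ((S(ω) X)ᵀ S(ω) X)⁻¹ (S(ω) X)ᵀ S(ω) y`. -/
def betaTilde {n p : ℕ} (X : Matrix (Fin n) (Fin p) ℝ) (y : Fin n → ℝ)
    (π : Fin n → ℝ) {m : ℕ} (ω : Fin m → Fin n) : Fin p → ℝ :=
  ((samplingS π ω * X)ᵀ * (samplingS π ω * X))⁻¹ *ᵥ
    ((samplingS π ω * X)ᵀ *ᵥ (samplingS π ω *ᵥ y))

/-- `Δ(X) = rᵀ diag(ℓ_i(X)/(m π_i)) r`. -/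
def deltaOLS {n p : ℕ} (X : Matrix (Fin n) (Fin p) ℝ) (y : Fin n → ℝ)
    (π : Fin n → ℝ) (m : ℕ) : ℝ :=
  olsResid X y ⬝ᵥ
    (Matrix.diagonal (fun i => lev X i / (m * π i)) *ᵥ olsResid X y)

/-! ### Finite i.i.d. sampling -/

/-- Expectation over `m` i.i.d. draws from `π`. -/
def Ex {n m : ℕ} (π : Fin n → ℝ) (F : (Fin m → Fin n) → ℝ) : ℝ :=
  ∑ ω, samplingP π ω * F ω

section Sampling

variable {n m : ℕ} {π : Fin n → ℝ}

lemma samplingP_nonneg (hπ : ∀ i, 0 ≤ π i) (ω : Fin m → Fin n) : 0 ≤ samplingP π ω :=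
  Finset.prod_nonneg fun s _ => hπ (ω s)

lemma Ex_one (hs : ∑ i, π i = 1) : Ex π (fun _ : Fin m → Fin n => (1 : ℝ)) = 1 := by
  have h := Finset.prod_univ_sum (fun _ : Fin m => (Finset.univ : Finset (Fin n)))
    (fun _ i => π i)
  simp only [hs, Finset.prod_const_one, Fintype.piFinset_univ] at h
  simp only [Ex, samplingP, mul_one]
  exact h.symm

lemma Ex_mono (hπ : ∀ i, 0 ≤ π i) {F G : (Fin m → Fin n) → ℝ} (h : ∀ ω, F ω ≤ G ω) :
    Ex π F ≤ Ex π G :=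
  Finset.sum_le_sum fun ω _ => mul_le_mul_of_nonneg_left (h ω) (samplingP_nonneg hπ ω)

lemma Ex_nonneg (hπ : ∀ i, 0 ≤ π i) {F : (Fin m → Fin n) → ℝ} (h : ∀ ω, 0 ≤ F ω) :
    0 ≤ Ex π F :=
  Finset.sum_nonneg fun ω _ => mul_nonneg (samplingP_nonneg hπ ω) (h ω)

lemma Ex_add (F G : (Fin m → Fin n) → ℝ) :
    Ex π (fun ω => F ω + G ω) = Ex π F + Ex π G := by
  simp only [Ex, mul_add, Finset.sum_add_distrib]

lemma Ex_sub (F G : (Fin m → Fin n) → ℝ) :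
    Ex π (fun ω => F ω - G ω) = Ex π F - Ex π G := by
  simp only [Ex, mul_sub, Finset.sum_sub_distrib]

lemma Ex_const_mul (c : ℝ) (F : (Fin m → Fin n) → ℝ) :
    Ex π (fun ω => c * F ω) = c * Ex π F := by
  simp only [Ex, Finset.mul_sum]
  exact Finset.sum_congr rfl fun ω _ => by ring

lemma Ex_sum {ι : Type*} (S : Finset ι) (F : ι → (Fin m → Fin n) → ℝ) :
    Ex π (fun ω => ∑ k ∈ S, F k ω) = ∑ k ∈ S, Ex π (F k) := by
  simp only [Ex, Finset.mul_sum]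
  exact Finset.sum_comm

lemma abs_Ex_le (hπ : ∀ i, 0 ≤ π i) (F : (Fin m → Fin n) → ℝ) :
    |Ex π F| ≤ Ex π (fun ω => |F ω|) := by
  refine (Finset.abs_sum_le_sum_abs _ _).trans (le_of_eq ?_)
  exact Finset.sum_congr rfl fun ω _ => by rw [abs_mul, abs_of_nonneg (samplingP_nonneg hπ ω)]

/-- Cauchy–Schwarz for `Ex`, with the second moments bounded by squares. -/
lemma Ex_abs_mul_le (hπ : ∀ i, 0 ≤ π i) {F G : (Fin m → Fin n) → ℝ} {A B : ℝ}
    (hA : 0 ≤ A) (hB : 0 ≤ B) (hF : Ex π (fun ω => F ω ^ 2) ≤ A ^ 2)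
    (hG : Ex π (fun ω => G ω ^ 2) ≤ B ^ 2) :
    Ex π (fun ω => |F ω * G ω|) ≤ A * B := by
  have key : (Ex π (fun ω => |F ω * G ω|)) ^ 2
      ≤ Ex π (fun ω => F ω ^ 2) * Ex π (fun ω => G ω ^ 2) := by
    have h := Finset.sum_mul_sq_le_sq_mul_sq (Finset.univ : Finset (Fin m → Fin n))
      (fun ω => Real.sqrt (samplingP π ω) * |F ω|) (fun ω => Real.sqrt (samplingP π ω) * |G ω|)
    have e : ∀ ω, Real.sqrt (samplingP π ω) * |F ω| * (Real.sqrt (samplingP π ω) * |G ω|)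
        = samplingP π ω * |F ω * G ω| := by
      intro ω
      rw [abs_mul, mul_mul_mul_comm, Real.mul_self_sqrt (samplingP_nonneg hπ ω)]
    simp only [e, mul_pow, Real.sq_sqrt (samplingP_nonneg hπ _), sq_abs] at h
    exact h
  have h2 : (Ex π (fun ω => |F ω * G ω|)) ^ 2 ≤ (A * B) ^ 2 := by
    rw [mul_pow]
    exact key.trans (mul_le_mul hF hG (Ex_nonneg hπ fun ω => sq_nonneg _) (sq_nonneg _))
  exact le_of_sq_le_sq h2 (mul_nonneg hA hB)

/-- Replacing one coordinate of the sample by a fresh draw does not change expectations. -/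
lemma Ex_resample (hs : ∑ i, π i = 1) (s : Fin m) (F : (Fin m → Fin n) → ℝ) :
    Ex π F = ∑ i, π i * Ex π (fun ω => F (Function.update ω s i)) := by
  have hP : ∀ q : Fin n × ({j // j ≠ s} → Fin n),
      samplingP π ((Equiv.funSplitAt s (Fin n)).symm q) = π q.1 * ∏ j, π (q.2 j) := by
    intro q
    unfold samplingP
    rw [Fintype.prod_eq_mul_prod_subtype_ne _ s]
    congr 1
    · simp [Equiv.funSplitAt, Equiv.piSplitAt]
    · refine Finset.prod_congr rfl fun j _ => ?_
      have := j.2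
      simp [Equiv.funSplitAt, Equiv.piSplitAt, this]
  have hU : ∀ (q : Fin n × ({j // j ≠ s} → Fin n)) (i : Fin n),
      Function.update ((Equiv.funSplitAt s (Fin n)).symm q) s i
        = (Equiv.funSplitAt s (Fin n)).symm (i, q.2) := by
    intro q i
    funext j
    by_cases hj : j = s
    · subst hj; simp [Equiv.funSplitAt, Equiv.piSplitAt]
    · simp [Equiv.funSplitAt, Equiv.piSplitAt, hj]
  have hE : ∀ G : (Fin m → Fin n) → ℝ, Ex π G
      = ∑ j, ∑ η : {j // j ≠ s} → Fin n, (π j * ∏ k, π (η k)) *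
          G ((Equiv.funSplitAt s (Fin n)).symm (j, η)) := by
    intro G
    unfold Ex
    rw [← Equiv.sum_comp (Equiv.funSplitAt s (Fin n)).symm, Fintype.sum_prod_type]
    simp only [hP]
  rw [hE F]
  refine Finset.sum_congr rfl fun i _ => ?_
  rw [hE]
  simp only [hU]
  rw [Finset.sum_comm, Finset.mul_sum]
  refine Finset.sum_congr rfl fun η _ => ?_
  rw [← Finset.sum_mul, ← Finset.sum_mul, hs]
  ring

/-- Factorization when the second factor does not look at coordinate `s`. -/
lemma Ex_indep (hs : ∑ i, π i = 1) (s : Fin m) (f : Fin n → ℝ) (G : (Fin m → Fin n) → ℝ)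
    (hG : ∀ ω i, G (Function.update ω s i) = G ω) :
    Ex π (fun ω => f (ω s) * G ω) = (∑ i, π i * f i) * Ex π G := by
  rw [Ex_resample hs s, Finset.sum_mul]
  refine Finset.sum_congr rfl fun i _ => ?_
  simp only [Function.update_self, hG, Ex_const_mul]
  ring

lemma Ex_coord (hs : ∑ i, π i = 1) (s : Fin m) (f : Fin n → ℝ) :
    Ex π (fun ω : Fin m → Fin n => f (ω s)) = ∑ i, π i * f i := by
  have := Ex_indep hs s f (fun _ => 1) (fun _ _ => rfl)
  simpa [Ex_one hs] using this

lemma Ex_coord_coord (hs : ∑ i, π i = 1) {s t : Fin m} (hst : s ≠ t) (f g : Fin n → ℝ) :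
    Ex π (fun ω : Fin m → Fin n => f (ω s) * g (ω t))
      = (∑ i, π i * f i) * ∑ i, π i * g i := by
  rw [Ex_indep hs s f (fun ω => g (ω t)), Ex_coord hs]
  intro ω i
  rw [Function.update_of_ne hst.symm]

/-- Second moment of a sum of i.i.d. terms. -/
lemma Ex_sum_sq (hs : ∑ i, π i = 1) (f : Fin n → ℝ) :
    Ex π (fun ω : Fin m → Fin n => (∑ s, f (ω s)) ^ 2)
      = m * (∑ i, π i * f i ^ 2) + (m * (m - 1)) * (∑ i, π i * f i) ^ 2 := by
  have h1 : ∀ ω : Fin m → Fin n, (∑ s, f (ω s)) ^ 2 = ∑ s, ∑ t, f (ω s) * f (ω t) := by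
    intro ω; rw [sq, Finset.sum_mul_sum]
  simp only [h1, Ex_sum]
  have h2 : ∀ s t : Fin m, Ex π (fun ω : Fin m → Fin n => f (ω s) * f (ω t))
      = (∑ i, π i * f i) ^ 2
        + if s = t then (∑ i, π i * f i ^ 2) - (∑ i, π i * f i) ^ 2 else 0 := by
    intro s t
    by_cases h : s = t
    · subst h
      have := Ex_coord (m := m) hs s (fun i => f i ^ 2)
      simp only [if_true]
      simp only [sq] at this ⊢
      rw [this]; ring
    · rw [Ex_coord_coord hs h, if_neg h]; ring
  simp only [h2, Finset.sum_add_distrib, Finset.sum_ite_eq, Finset.mem_univ, if_true,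
    Finset.sum_const, Finset.card_univ, Fintype.card_fin, nsmul_eq_mul]
  ring

/-- Second moment of a decoupled quadratic chaos: for a kernel with vanishing marginals only the
pairs `(s, t)` and `(t, s)` correlate. -/
lemma Ex_chaos_sq (hπ : ∀ i, 0 ≤ π i) (hs : ∑ i, π i = 1) (h : Fin n → Fin n → ℝ)
    (h1 : ∀ j, ∑ i, π i * h i j = 0) (h2 : ∀ i, ∑ j, π j * h i j = 0) :
    Ex π (fun ω : Fin m → Fin n =>
        (∑ q ∈ (Finset.univ : Finset (Fin m)).offDiag, h (ω q.1) (ω q.2)) ^ 2)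
      ≤ 2 * m ^ 2 * ∑ i, ∑ j, π i * π j * h i j ^ 2 := by
  set V := ∑ i, ∑ j, π i * π j * h i j ^ 2 with hV
  have hV0 : 0 ≤ V := Finset.sum_nonneg fun i _ => Finset.sum_nonneg fun j _ =>
    mul_nonneg (mul_nonneg (hπ i) (hπ j)) (sq_nonneg _)
  have hdiag : ∀ s t : Fin m, s ≠ t →
      Ex π (fun ω : Fin m → Fin n => h (ω s) (ω t) ^ 2) = V := by
    intro s t hst
    rw [Ex_resample hs s, hV]
    refine Finset.sum_congr rfl fun i _ => ?_
    have : ∀ ω : Fin m → Fin n, h (Function.update ω s i s) (Function.update ω s i t) ^ 2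
        = h i (ω t) ^ 2 := by
      intro ω; rw [Function.update_self, Function.update_of_ne hst.symm]
    simp only [this]
    rw [Ex_coord hs t (fun j => h i j ^ 2), Finset.mul_sum]
    exact Finset.sum_congr rfl fun j _ => by ring
  -- A coordinate used by the first pair only can be averaged out.
  have hzero : ∀ (s t : Fin m) (G : (Fin m → Fin n) → ℝ), s ≠ t →
      ((∀ ω i, G (Function.update ω s i) = G ω) ∨ (∀ ω i, G (Function.update ω t i) = G ω)) →
      Ex π (fun ω : Fin m → Fin n => h (ω s) (ω t) * G ω) = 0 := by
    intro s t G hst hG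
    rcases hG with hG | hG
    · rw [Ex_resample hs s]
      have : ∀ i, π i * Ex π (fun ω : Fin m → Fin n =>
          h (Function.update ω s i s) (Function.update ω s i t) * G (Function.update ω s i))
          = Ex π (fun ω : Fin m → Fin n => π i * h i (ω t) * G ω) := by
        intro i
        rw [← Ex_const_mul]
        congr 1; funext ω
        rw [Function.update_self, Function.update_of_ne hst.symm, hG]; ring
      simp only [this]
      rw [← Ex_sum]
      simp only [← Finset.sum_mul, h1, zero_mul]
      simp [Ex]
    · rw [Ex_resample hs t]
      have : ∀ i, π i * Ex π (fun ω : Fin m → Fin n =>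
          h (Function.update ω t i s) (Function.update ω t i t) * G (Function.update ω t i))
          = Ex π (fun ω : Fin m → Fin n => π i * h (ω s) i * G ω) := by
        intro i
        rw [← Ex_const_mul]
        congr 1; funext ω
        rw [Function.update_self, Function.update_of_ne hst, hG]; ring
      simp only [this]
      rw [← Ex_sum]
      simp only [← Finset.sum_mul, h2, zero_mul]
      simp [Ex]
  have hexp : ∀ ω : Fin m → Fin n,
      (∑ q ∈ (Finset.univ : Finset (Fin m)).offDiag, h (ω q.1) (ω q.2)) ^ 2
      = ∑ q ∈ (Finset.univ : Finset (Fin m)).offDiag,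
          ∑ q' ∈ (Finset.univ : Finset (Fin m)).offDiag,
            h (ω q.1) (ω q.2) * h (ω q'.1) (ω q'.2) := by
    intro ω; rw [sq, Finset.sum_mul_sum]
  simp only [hexp, Ex_sum]
  have hrow : ∀ q ∈ (Finset.univ : Finset (Fin m)).offDiag,
      ∑ q' ∈ (Finset.univ : Finset (Fin m)).offDiag,
        Ex π (fun ω : Fin m → Fin n => h (ω q.1) (ω q.2) * h (ω q'.1) (ω q'.2)) ≤ 2 * V := by
    rintro ⟨s, t⟩ hq
    have hst : s ≠ t := by simpa using hq
    have hsub : ({(s, t), (t, s)} : Finset (Fin m × Fin m))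
        ⊆ (Finset.univ : Finset (Fin m)).offDiag := by
      intro x hx
      simp only [Finset.mem_insert, Finset.mem_singleton] at hx
      rcases hx with rfl | rfl
      · simpa using hst
      · simpa using hst.symm
    rw [← Finset.sum_subset hsub]
    · rw [Finset.sum_pair (by simp [hst])]
      have e1 : Ex π (fun ω : Fin m → Fin n => h (ω s) (ω t) * h (ω s) (ω t)) = V := by
        rw [← hdiag s t hst]; congr 1; funext ω; ring
      have e2 : Ex π (fun ω : Fin m → Fin n => h (ω s) (ω t) * h (ω t) (ω s)) ≤ V := by
        have : Ex π (fun ω : Fin m → Fin n => h (ω s) (ω t) * h (ω t) (ω s))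
            ≤ Ex π (fun ω : Fin m → Fin n =>
              (1/2) * h (ω s) (ω t) ^ 2 + (1/2) * h (ω t) (ω s) ^ 2) :=
          Ex_mono hπ fun ω => by nlinarith [sq_nonneg (h (ω s) (ω t) - h (ω t) (ω s))]
        rw [Ex_add, Ex_const_mul, Ex_const_mul, hdiag s t hst, hdiag t s hst.symm] at this
        linarith
      simp only
      linarith
    · rintro ⟨s', t'⟩ hq' hne
      have hst' : s' ≠ t' := by simpa using hq'
      refine hzero s t (fun ω => h (ω s') (ω t')) hst ?_
      simp only [Finset.mem_insert, Finset.mem_singleton, Prod.mk.injEq, not_or] at hne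
      by_cases hs1 : s = s' ∨ s = t'
      · right
        intro ω i
        have ha : s' ≠ t := by
          rintro rfl
          rcases hs1 with h' | h'
          · exact hst h'
          · exact hne.2 ⟨rfl, h'.symm⟩
        have hb : t' ≠ t := by
          rintro rfl
          rcases hs1 with h' | h'
          · exact hne.1 ⟨h'.symm, rfl⟩
          · exact hst h'
        simp only [Function.update_of_ne ha, Function.update_of_ne hb]
      · left
        intro ω i
        push Not at hs1
        simp only [Function.update_of_ne hs1.1.symm, Function.update_of_ne hs1.2.symm]
  refine (Finset.sum_le_sum hrow).trans ?_
  rw [Finset.sum_const, nsmul_eq_mul]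
  have hc : ((Finset.univ : Finset (Fin m)).offDiag.card : ℝ) ≤ (m : ℝ) ^ 2 := by
    rw [Finset.offDiag_card]
    simp only [Finset.card_univ, Fintype.card_fin]
    calc ((m * m - m : ℕ) : ℝ) ≤ ((m * m : ℕ) : ℝ) := by exact_mod_cast Nat.sub_le _ _
      _ = (m : ℝ) ^ 2 := by push_cast; ring
  nlinarith

end Sampling

/-! ### Spectral calculus of symmetric matrices -/

/-- Eigenvalues of a symmetric matrix (and `0` for a matrix that is not symmetric). -/
def eig {p : ℕ} (A : Matrix (Fin p) (Fin p) ℝ) : Fin p → ℝ := by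
  classical
  exact if h : A.IsHermitian then h.eigenvalues else 0

/-- An orthonormal eigenbasis of a symmetric matrix (and `0` for a matrix that is not symmetric). -/
def evec {p : ℕ} (A : Matrix (Fin p) (Fin p) ℝ) : Fin p → Fin p → ℝ := by
  classical
  exact if h : A.IsHermitian then fun j => (h.eigenvectorBasis j).ofLp else 0

/-- `trE t A` is the trace of `exp (t A)`. -/
def trE {p : ℕ} (t : ℝ) (A : Matrix (Fin p) (Fin p) ℝ) : ℝ := ∑ j, Real.exp (t * eig A j)

/-- `qE t A x` is the quadratic form `xᵀ exp (t A) x`. -/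
def qE {p : ℕ} (t : ℝ) (A : Matrix (Fin p) (Fin p) ℝ) (x : Fin p → ℝ) : ℝ :=
  ∑ j, Real.exp (t * eig A j) * (evec A j ⬝ᵥ x) ^ 2

section Spectral

variable {p : ℕ} {A H : Matrix (Fin p) (Fin p) ℝ}

lemma mulVec_evec (hA : A.IsHermitian) (j : Fin p) : A *ᵥ evec A j = eig A j • evec A j := by
  simp only [evec, eig, dif_pos hA]
  exact hA.mulVec_eigenvectorBasis j

lemma sum_evec_mul (hA : A.IsHermitian) (x y : Fin p → ℝ) :
    ∑ j, (evec A j ⬝ᵥ x) * (evec A j ⬝ᵥ y) = x ⬝ᵥ y := by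
  have h := hA.eigenvectorBasis.sum_inner_mul_inner (WithLp.toLp 2 x) (WithLp.toLp 2 y)
  simp only [EuclideanSpace.inner_eq_star_dotProduct, star_trivial] at h
  simp only [evec, dif_pos hA]
  rw [dotProduct_comm x y, ← h]
  exact Finset.sum_congr rfl fun j _ => by rw [dotProduct_comm y]

lemma sum_evec_sq (hA : A.IsHermitian) (x : Fin p → ℝ) :
    ∑ j, (evec A j ⬝ᵥ x) ^ 2 = x ⬝ᵥ x := by
  rw [← sum_evec_mul hA x x]
  exact Finset.sum_congr rfl fun j _ => sq _

lemma evec_dot (hA : A.IsHermitian) (i j : Fin p) :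
    evec A i ⬝ᵥ evec A j = if i = j then 1 else 0 := by
  have h := orthonormal_iff_ite.mp hA.eigenvectorBasis.orthonormal j i
  simp only [EuclideanSpace.inner_eq_star_dotProduct, star_trivial] at h
  simp only [evec, dif_pos hA]
  rw [h]
  simp only [eq_comm]

lemma dot_mulVec_symm (hA : A.IsHermitian) (x y : Fin p → ℝ) :
    x ⬝ᵥ (A *ᵥ y) = (A *ᵥ x) ⬝ᵥ y := by
  have : Aᵀ = A := by
    have h : Aᴴ = A := hA
    rwa [conjTranspose_eq_transpose_of_trivial] at h
  rw [dotProduct_mulVec, ← mulVec_transpose, this]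

lemma evec_dot_mulVec (hA : A.IsHermitian) (j : Fin p) (x : Fin p → ℝ) :
    evec A j ⬝ᵥ (A *ᵥ x) = eig A j * (evec A j ⬝ᵥ x) := by
  rw [dot_mulVec_symm hA, mulVec_evec hA, smul_dotProduct, smul_eq_mul]

lemma quad_eq (hA : A.IsHermitian) (x : Fin p → ℝ) :
    x ⬝ᵥ (A *ᵥ x) = ∑ j, eig A j * (evec A j ⬝ᵥ x) ^ 2 := by
  rw [← sum_evec_mul hA x (A *ᵥ x)]
  refine Finset.sum_congr rfl fun j _ => ?_
  rw [evec_dot_mulVec hA]; ring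

lemma evec_quad (hA : A.IsHermitian) (j : Fin p) : evec A j ⬝ᵥ (A *ᵥ evec A j) = eig A j := by
  rw [evec_dot_mulVec hA, evec_dot hA]; simp

/-- Weighted Chebyshev sum inequality. -/
lemma chebyshev_weighted {ι : Type*} [Fintype ι] (w f g : ι → ℝ) (hw : ∀ i, 0 ≤ w i)
    (hfg : ∀ i j, 0 ≤ (f i - f j) * (g i - g j)) :
    (∑ i, w i * f i) * (∑ i, w i * g i) ≤ (∑ i, w i) * ∑ i, w i * (f i * g i) := by
  have h : 0 ≤ ∑ i, ∑ j, w i * w j * ((f i - f j) * (g i - g j)) :=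
    Finset.sum_nonneg fun i _ => Finset.sum_nonneg fun j _ =>
      mul_nonneg (mul_nonneg (hw i) (hw j)) (hfg i j)
  have e : ∑ i, ∑ j, w i * w j * ((f i - f j) * (g i - g j))
      = 2 * ((∑ i, w i) * ∑ i, w i * (f i * g i))
        - 2 * ((∑ i, w i * f i) * (∑ i, w i * g i)) := by
    have e1 : ∀ i j, w i * w j * ((f i - f j) * (g i - g j))
        = (w i * (f i * g i)) * w j + w i * (w j * (f j * g j))
          - (w i * f i) * (w j * g j) - (w i * g i) * (w j * f j) := fun i j => by ring
    simp only [e1, Finset.sum_sub_distrib, Finset.sum_add_distrib, ← Finset.sum_mul_sum]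
    ring
  rw [e] at h
  linarith

/-- Power version of `qE_rank_one_le`. In an eigenbasis of `A + κ` the iterates of
`H + κ = (A + κ) + c a aᵀ` on `a` have coordinates `(v_j · a) d_k(j)`, where `d_k(j)` is a
nondecreasing function of the eigenvalue; Chebyshev's inequality then trades one application
of `c a aᵀ` for the scalar `q`. -/
lemma rank_one_pow_le (hA : A.IsHermitian) (a : Fin p → ℝ) {c q κ : ℝ}
    (hc : 0 ≤ c) (hq : c * (a ⬝ᵥ a) ≤ q)
    (hH : ∀ x, H *ᵥ x = A *ᵥ x + (c * (a ⬝ᵥ x)) • a)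
    (hκ : ∀ j, 0 ≤ eig A j + κ) (z : ℕ → Fin p → ℝ) (hz0 : z 0 = a)
    (hz : ∀ k, z (k + 1) = H *ᵥ z k + κ • z k) (k : ℕ) :
    a ⬝ᵥ z k ≤ ∑ j, (evec A j ⬝ᵥ a) ^ 2 * (eig A j + κ + q) ^ k := by
  set w : Fin p → ℝ := fun j => (evec A j ⬝ᵥ a) ^ 2 with hw
  set l : Fin p → ℝ := fun j => eig A j + κ with hl
  have hw0 : ∀ j, 0 ≤ w j := fun j => sq_nonneg _
  have hwsum : ∑ j, w j = a ⬝ᵥ a := sum_evec_sq hA a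
  have hq0 : 0 ≤ q := by
    refine le_trans (mul_nonneg hc ?_) hq
    rw [← hwsum]; exact Finset.sum_nonneg fun j _ => hw0 j
  let d : ℕ → Fin p → ℝ := fun k => Nat.rec (fun _ => 1)
    (fun k dk => fun j => l j * dk j + c * (a ⬝ᵥ z k)) k
  have hd0 : ∀ j, d 0 j = 1 := fun j => rfl
  have hd : ∀ k j, d (k + 1) j = l j * d k j + c * (a ⬝ᵥ z k) := fun k j => rfl
  have hcoord : ∀ k j, evec A j ⬝ᵥ z k = (evec A j ⬝ᵥ a) * d k j := by
    intro k
    induction k with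
    | zero => intro j; rw [hz0, hd0, mul_one]
    | succ k ih =>
      intro j
      rw [hz, hH, hd, dotProduct_add, dotProduct_add, dotProduct_smul, dotProduct_smul,
        evec_dot_mulVec hA, ih]
      simp only [smul_eq_mul, hl]
      ring
  have hh : ∀ k, a ⬝ᵥ z k = ∑ j, w j * d k j := by
    intro k
    rw [← sum_evec_mul hA a (z k)]
    refine Finset.sum_congr rfl fun j _ => ?_
    rw [hcoord]; simp only [hw]; ring
  have hdpos : ∀ k j, 0 ≤ d k j := by
    intro k
    induction k with
    | zero => intro j; rw [hd0]; norm_num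
    | succ k ih =>
      intro j
      rw [hd]
      have : 0 ≤ a ⬝ᵥ z k := by
        rw [hh]; exact Finset.sum_nonneg fun j _ => mul_nonneg (hw0 j) (ih j)
      exact add_nonneg (mul_nonneg (hκ j) (ih j)) (mul_nonneg hc this)
  have hdmono : ∀ k i j, l i ≤ l j → d k i ≤ d k j := by
    intro k
    induction k with
    | zero => intro i j _; rw [hd0, hd0]
    | succ k ih =>
      intro i j hij
      rw [hd, hd]
      have := mul_le_mul hij (ih i j hij) (hdpos k i) (hκ j)
      linarith
  have step : ∀ k i, ∑ j, w j * (d (k + 1) j * (l j + q) ^ i)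
      ≤ ∑ j, w j * (d k j * (l j + q) ^ (i + 1)) := by
    intro k i
    have hcheb := chebyshev_weighted w (d k) (fun j => (l j + q) ^ i) hw0 (by
      intro a b
      rcases le_total (l a) (l b) with hab | hab
      · refine mul_nonneg_of_nonpos_of_nonpos (by linarith [hdmono k a b hab]) ?_
        have : (l a + q) ^ i ≤ (l b + q) ^ i :=
          pow_le_pow_left₀ (add_nonneg (hκ a) hq0) (by linarith) i
        linarith
      · refine mul_nonneg (by linarith [hdmono k b a hab]) ?_
        have : (l b + q) ^ i ≤ (l a + q) ^ i :=
          pow_le_pow_left₀ (add_nonneg (hκ b) hq0) (by linarith) i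
        linarith)
    rw [← hh, hwsum] at hcheb
    have hpos : 0 ≤ ∑ j, w j * (d k j * (l j + q) ^ i) :=
      Finset.sum_nonneg fun j _ => mul_nonneg (hw0 j)
        (mul_nonneg (hdpos k j) (pow_nonneg (add_nonneg (hκ j) hq0) i))
    have e1 : ∑ j, w j * (d (k + 1) j * (l j + q) ^ i)
        = ∑ j, w j * (l j * d k j * (l j + q) ^ i)
          + c * ((a ⬝ᵥ z k) * ∑ j, w j * (l j + q) ^ i) := by
      rw [Finset.mul_sum, Finset.mul_sum, ← Finset.sum_add_distrib]
      refine Finset.sum_congr rfl fun j _ => ?_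
      rw [hd]; ring
    have e2 : ∑ j, w j * (d k j * (l j + q) ^ (i + 1))
        = ∑ j, w j * (l j * d k j * (l j + q) ^ i)
          + q * ∑ j, w j * (d k j * (l j + q) ^ i) := by
      rw [Finset.mul_sum, ← Finset.sum_add_distrib]
      refine Finset.sum_congr rfl fun j _ => ?_
      ring
    rw [e1, e2]
    have h3 := mul_le_mul_of_nonneg_left hcheb hc
    have h4 := mul_le_mul_of_nonneg_right hq hpos
    linarith
  have hT : ∀ k i, ∑ j, w j * (d k j * (l j + q) ^ i) ≤ ∑ j, w j * (l j + q) ^ (k + i) := by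
    intro k
    induction k with
    | zero => intro i; simp only [hd0, one_mul, zero_add, le_refl]
    | succ k ih =>
      intro i
      refine (step k i).trans ((ih (i + 1)).trans (le_of_eq ?_))
      rw [show k + (i + 1) = k + 1 + i by ring]
  have := hT k 0
  simp only [pow_zero, mul_one, add_zero] at this
  rw [hh]
  exact this

/-- For `H = A + c a aᵀ` with `c ‖a‖² ≤ q`: `aᵀ exp(tH) a ≤ exp(tq) aᵀ exp(tA) a`. This replaces
the Golden–Thompson inequality in the matrix Chernoff argument. -/
lemma qE_rank_one_le (hA : A.IsHermitian) (hHh : H.IsHermitian) (a : Fin p → ℝ) {c q t : ℝ}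
    (hc : 0 ≤ c) (hq : c * (a ⬝ᵥ a) ≤ q) (ht : 0 ≤ t)
    (hH : ∀ x, H *ᵥ x = A *ᵥ x + (c * (a ⬝ᵥ x)) • a) :
    qE t H a ≤ Real.exp (t * q) * qE t A a := by
  -- shift by `κ` so that all eigenvalues of `A + κ` are nonnegative
  set κ : ℝ := ∑ j, |eig A j| with hκdef
  have hκ : ∀ j, 0 ≤ eig A j + κ := by
    intro j
    have h1 : |eig A j| ≤ κ :=
      Finset.single_le_sum (f := fun j => |eig A j|) (fun i _ => abs_nonneg _) (Finset.mem_univ j)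
    have h2 := neg_abs_le (eig A j)
    linarith
  clear_value κ
  let z : ℕ → Fin p → ℝ := fun k => Nat.rec a (fun _ zk => H *ᵥ zk + κ • zk) k
  have hz0 : z 0 = a := rfl
  have hz : ∀ k, z (k + 1) = H *ᵥ z k + κ • z k := fun k => rfl
  have hcoord : ∀ k j, evec H j ⬝ᵥ z k = (eig H j + κ) ^ k * (evec H j ⬝ᵥ a) := by
    intro k
    induction k with
    | zero => intro j; rw [hz0]; simp
    | succ k ih =>
      intro j
      rw [hz, dotProduct_add, dotProduct_smul, evec_dot_mulVec hHh, ih]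
      simp only [smul_eq_mul]; ring
  have hh : ∀ k, a ⬝ᵥ z k = ∑ j, (evec H j ⬝ᵥ a) ^ 2 * (eig H j + κ) ^ k := by
    intro k
    rw [← sum_evec_mul hHh a (z k)]
    refine Finset.sum_congr rfl fun j _ => ?_
    rw [hcoord]; ring
  have hsum : ∀ (w μ : Fin p → ℝ), HasSum (fun k : ℕ => ∑ j, w j * (t ^ k / k.factorial * μ j ^ k))
      (∑ j, w j * Real.exp (t * μ j)) := by
    intro w μ
    refine hasSum_sum fun j _ => HasSum.mul_left _ ?_
    have := NormedSpace.expSeries_div_hasSum_exp (𝔸 := ℝ) (t * μ j)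
    rw [← Real.exp_eq_exp_ℝ] at this
    have e : (fun k : ℕ => t ^ k / (k.factorial : ℝ) * μ j ^ k)
        = fun k : ℕ => (t * μ j) ^ k / (k.factorial : ℝ) := by
      funext k
      rw [mul_pow]; ring
    rw [e]
    exact this
  have key := hasSum_le (fun k => ?_) (hsum (fun j => (evec H j ⬝ᵥ a) ^ 2) (fun j => eig H j + κ))
    (hsum (fun j => (evec A j ⬝ᵥ a) ^ 2) (fun j => eig A j + κ + q))
  · have e1 : ∑ j, (evec H j ⬝ᵥ a) ^ 2 * Real.exp (t * (eig H j + κ))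
        = Real.exp (t * κ) * qE t H a := by
      rw [qE, Finset.mul_sum]
      refine Finset.sum_congr rfl fun j _ => ?_
      rw [mul_add, Real.exp_add]; ring
    have e2 : ∑ j, (evec A j ⬝ᵥ a) ^ 2 * Real.exp (t * (eig A j + κ + q))
        = Real.exp (t * κ) * (Real.exp (t * q) * qE t A a) := by
      rw [qE, Finset.mul_sum, Finset.mul_sum]
      refine Finset.sum_congr rfl fun j _ => ?_
      rw [mul_add, mul_add, Real.exp_add, Real.exp_add]; ring
    rw [e1, e2] at key
    exact le_of_mul_le_mul_left key (Real.exp_pos _)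
  · have hk := rank_one_pow_le hA a hc hq hH hκ z hz0 hz k
    rw [hh] at hk
    have hcoef : 0 ≤ t ^ k / (k.factorial : ℝ) := by positivity
    have := mul_le_mul_of_nonneg_left hk hcoef
    rw [Finset.mul_sum, Finset.mul_sum] at this
    refine le_trans (le_of_eq ?_) (this.trans (le_of_eq ?_))
    · exact Finset.sum_congr rfl fun j _ => by ring
    · exact Finset.sum_congr rfl fun j _ => by ring

/-- Monotonicity of `A ↦ tr exp (t A)` up to a shift by `q`, by Jensen's inequality along an
eigenbasis of `A`. -/
lemma trE_le (hA : A.IsHermitian) (hHh : H.IsHermitian) {t q : ℝ} (ht : 0 ≤ t)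
    (h : ∀ x, x ⬝ᵥ (A *ᵥ x) ≤ x ⬝ᵥ (H *ᵥ x) + q * (x ⬝ᵥ x)) :
    trE t A ≤ Real.exp (t * q) * trE t H := by
  have h1 : ∀ j, Real.exp (t * eig A j)
      ≤ ∑ k, (evec H k ⬝ᵥ evec A j) ^ 2 * (Real.exp (t * q) * Real.exp (t * eig H k)) := by
    intro j
    have hone : ∑ k, (evec H k ⬝ᵥ evec A j) ^ 2 = 1 := by
      rw [sum_evec_sq hHh, evec_dot hA]; simp
    have h2 : t * eig A j
        ≤ ∑ k, (evec H k ⬝ᵥ evec A j) ^ 2 • (t * q + t * eig H k) := by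
      have := h (evec A j)
      rw [evec_quad hA, evec_dot hA, quad_eq hHh] at this
      have h3 := mul_le_mul_of_nonneg_left this ht
      refine h3.trans (le_of_eq ?_)
      simp only [smul_eq_mul, mul_add, Finset.sum_add_distrib, ← Finset.sum_mul, hone, if_true]
      rw [Finset.mul_sum, add_comm]
      congr 1
      · ring
      · exact Finset.sum_congr rfl fun k _ => by ring
    refine (Real.exp_le_exp.mpr h2).trans ?_
    refine (convexOn_exp.map_sum_le (fun k _ => sq_nonneg _) hone (fun _ _ => Set.mem_univ _)).trans
      (le_of_eq ?_)
    exact Finset.sum_congr rfl fun k _ => by rw [Real.exp_add, smul_eq_mul]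
  refine (Finset.sum_le_sum fun j _ => h1 j).trans (le_of_eq ?_)
  rw [Finset.sum_comm, trE, Finset.mul_sum]
  refine Finset.sum_congr rfl fun k _ => ?_
  rw [← Finset.sum_mul]
  have : ∑ j, (evec H k ⬝ᵥ evec A j) ^ 2 = 1 := by
    have := sum_evec_sq hA (evec H k)
    rw [evec_dot hHh] at this
    simp only [if_true] at this
    rw [← this]
    exact Finset.sum_congr rfl fun j _ => by rw [dotProduct_comm]
  rw [this, one_mul]

end Spectral

/-! ### Exponential moments of the sampled Gram matrix -/

/-- The part of the sampled Gram matrix `m⁻¹ ∑ₛ a_{ω s} a_{ω s}ᵀ` coming from the draws `s ∈ S`. -/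
def gramOn {n m p : ℕ} (a : Fin n → Fin p → ℝ) (S : Finset (Fin m)) (ω : Fin m → Fin n) :
    Matrix (Fin p) (Fin p) ℝ :=
  (m : ℝ)⁻¹ • ∑ s ∈ S, vecMulVec (a (ω s)) (a (ω s))

/-- The sampled Gram matrix `m⁻¹ ∑ₛ a_{ω s} a_{ω s}ᵀ`. -/
abbrev gram {n m p : ℕ} (a : Fin n → Fin p → ℝ) (ω : Fin m → Fin n) :
    Matrix (Fin p) (Fin p) ℝ :=
  gramOn a Finset.univ ω

lemma dot_sq_le {p : ℕ} (x y : Fin p → ℝ) : (x ⬝ᵥ y) ^ 2 ≤ (x ⬝ᵥ x) * (y ⬝ᵥ y) := by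
  have := Finset.sum_mul_sq_le_sq_mul_sq Finset.univ x y
  simpa only [dotProduct, sq] using this

lemma dot_self_nonneg {p : ℕ} (x : Fin p → ℝ) : 0 ≤ x ⬝ᵥ x :=
  Finset.sum_nonneg fun i _ => mul_self_nonneg (x i)

/-- Grönwall's inequality for a linear differential inequality. -/
lemma gronwall_linear {F F' : ℝ → ℝ} {c T : ℝ} (hT : 0 ≤ T) (hF : ∀ t, HasDerivAt F (F' t) t)
    (h : ∀ t, 0 ≤ t → t ≤ T → F' t ≤ c * F t) : F T ≤ F 0 * Real.exp (c * T) := by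
  have hd : ∀ t, HasDerivAt (fun t => F t * Real.exp (-(c * t)))
      (F' t * Real.exp (-(c * t)) + F t * (Real.exp (-(c * t)) * -(c * 1))) t := fun t =>
    (hF t).mul (((hasDerivAt_id t).const_mul c).neg.exp)
  have hanti : AntitoneOn (fun t => F t * Real.exp (-(c * t))) (Set.Icc 0 T) := by
    refine antitoneOn_of_deriv_nonpos (convex_Icc 0 T)
      (fun t _ => (hd t).continuousAt.continuousWithinAt)
      (fun t _ => (hd t).differentiableAt.differentiableWithinAt) ?_
    intro t ht
    rw [interior_Icc] at ht
    rw [(hd t).deriv]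
    have := mul_le_mul_of_nonneg_right (h t ht.1.le ht.2.le) (Real.exp_pos (-(c * t))).le
    linarith
  have := hanti (Set.left_mem_Icc.mpr hT) (Set.right_mem_Icc.mpr hT) hT
  simp only [mul_zero, neg_zero, Real.exp_zero, mul_one] at this
  have h2 := mul_le_mul_of_nonneg_right this (Real.exp_pos (c * T)).le
  rw [mul_assoc, ← Real.exp_add] at h2
  simpa using h2

section Chernoff

variable {n m p : ℕ} {π : Fin n → ℝ} {a : Fin n → Fin p → ℝ} {L : ℝ}

lemma gramOn_mulVec (S : Finset (Fin m)) (ω : Fin m → Fin n) (x : Fin p → ℝ) :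
    gramOn a S ω *ᵥ x = (m : ℝ)⁻¹ • ∑ s ∈ S, (a (ω s) ⬝ᵥ x) • a (ω s) := by
  rw [gramOn, smul_mulVec, Matrix.sum_mulVec]
  congr 1
  refine Finset.sum_congr rfl fun s _ => ?_
  rw [vecMulVec_mulVec]
  simp

lemma gramOn_isHermitian (S : Finset (Fin m)) (ω : Fin m → Fin n) :
    (gramOn a S ω).IsHermitian := by
  unfold gramOn Matrix.IsHermitian
  rw [conjTranspose_eq_transpose_of_trivial, transpose_smul, transpose_sum]
  congr 1
  refine Finset.sum_congr rfl fun s _ => ?_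
  rw [transpose_vecMulVec]

lemma gramOn_quad (S : Finset (Fin m)) (ω : Fin m → Fin n) (x : Fin p → ℝ) :
    x ⬝ᵥ (gramOn a S ω *ᵥ x) = (m : ℝ)⁻¹ * ∑ s ∈ S, (a (ω s) ⬝ᵥ x) ^ 2 := by
  rw [gramOn_mulVec, dotProduct_smul, dotProduct_sum, smul_eq_mul]
  congr 1
  refine Finset.sum_congr rfl fun s _ => ?_
  rw [dotProduct_smul, smul_eq_mul, dotProduct_comm x, sq]

lemma gram_eq_add (s : Fin m) (ω : Fin m → Fin n) (x : Fin p → ℝ) :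
    gram a ω *ᵥ x = gramOn a (Finset.univ.erase s) ω *ᵥ x
      + ((m : ℝ)⁻¹ * (a (ω s) ⬝ᵥ x)) • a (ω s) := by
  rw [gramOn_mulVec, gramOn_mulVec, ← Finset.add_sum_erase _ _ (Finset.mem_univ s), smul_add,
    smul_smul, add_comm]

lemma gramOn_erase_update (s : Fin m) (ω : Fin m → Fin n) (i : Fin n) :
    gramOn a (Finset.univ.erase s) (Function.update ω s i)
      = gramOn a (Finset.univ.erase s) ω := by
  unfold gramOn
  congr 1
  refine Finset.sum_congr rfl fun t ht => ?_
  rw [Function.update_of_ne (Finset.ne_of_mem_erase ht)]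

lemma gram_quad_split (s : Fin m) (ω : Fin m → Fin n) (x : Fin p → ℝ) :
    x ⬝ᵥ (gram a ω *ᵥ x) = x ⬝ᵥ (gramOn a (Finset.univ.erase s) ω *ᵥ x)
      + (m : ℝ)⁻¹ * (a (ω s) ⬝ᵥ x) ^ 2 := by
  rw [gram_eq_add s, dotProduct_add, dotProduct_smul, smul_eq_mul, dotProduct_comm x (a (ω s))]
  ring

lemma rank_one_quad_le (hL : ∀ i, a i ⬝ᵥ a i ≤ L) (i : Fin n) (x : Fin p → ℝ) :
    (m : ℝ)⁻¹ * (a i ⬝ᵥ x) ^ 2 ≤ L / m * (x ⬝ᵥ x) := by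
  have h1 := dot_sq_le (a i) x
  have h2 := mul_le_mul_of_nonneg_right (hL i) (dot_self_nonneg x)
  have h3 := mul_le_mul_of_nonneg_left (h1.trans h2) (inv_nonneg.mpr (Nat.cast_nonneg (α := ℝ) m))
  refine h3.trans (le_of_eq ?_)
  rw [div_eq_mul_inv]; ring

lemma trE_gram_update (hL : ∀ i, a i ⬝ᵥ a i ≤ L) {t : ℝ} (ht : 0 ≤ t) (s : Fin m) (i : Fin n)
    (ω : Fin m → Fin n) :
    trE t (gram a (Function.update ω s i)) ≤ Real.exp (t * (L / m)) * trE t (gram a ω) := by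
  refine trE_le (gramOn_isHermitian _ _) (gramOn_isHermitian _ _) ht fun x => ?_
  rw [gram_quad_split s, gram_quad_split s ω, gramOn_erase_update]
  have h1 := rank_one_quad_le (m := m) hL (Function.update ω s i s) x
  have h2 : 0 ≤ (m : ℝ)⁻¹ * (a (ω s) ⬝ᵥ x) ^ 2 := by positivity
  linarith

lemma trE_neg_gram_update (hL : ∀ i, a i ⬝ᵥ a i ≤ L) {t : ℝ} (ht : 0 ≤ t) (s : Fin m) (i : Fin n)
    (ω : Fin m → Fin n) :
    trE t (-gram a (Function.update ω s i)) ≤ Real.exp (t * (L / m)) * trE t (-gram a ω) := by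
  refine trE_le (gramOn_isHermitian _ _).neg (gramOn_isHermitian _ _).neg ht fun x => ?_
  rw [neg_mulVec, neg_mulVec, dotProduct_neg, dotProduct_neg, gram_quad_split s,
    gram_quad_split s ω, gramOn_erase_update]
  have h1 := rank_one_quad_le (m := m) hL (ω s) x
  have h2 : 0 ≤ (m : ℝ)⁻¹ * (a (Function.update ω s i s) ⬝ᵥ x) ^ 2 := by positivity
  linarith

/-- An independent isotropic vector turns the quadratic form into a trace. -/
lemma Ex_qE_erase (hs : ∑ i, π i = 1) (hiso : ∀ x, ∑ i, π i * (a i ⬝ᵥ x) ^ 2 = x ⬝ᵥ x) (t : ℝ)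
    (s : Fin m) (M : (Fin m → Fin n) → Matrix (Fin p) (Fin p) ℝ) (hM : ∀ ω, (M ω).IsHermitian)
    (hMs : ∀ ω i, M (Function.update ω s i) = M ω) :
    Ex π (fun ω => qE t (M ω) (a (ω s))) = Ex π (fun ω => trE t (M ω)) := by
  rw [Ex_resample hs s]
  simp only [Function.update_self, hMs, ← Ex_const_mul]
  rw [← Ex_sum]
  congr 1; funext ω
  unfold qE trE
  simp only [Finset.mul_sum]
  rw [Finset.sum_comm]
  refine Finset.sum_congr rfl fun j _ => ?_
  have : ∑ i, π i * (a i ⬝ᵥ evec (M ω) j) ^ 2 = 1 := by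
    rw [hiso, evec_dot (hM ω)]; simp
  calc ∑ i, π i * (Real.exp (t * eig (M ω) j) * (evec (M ω) j ⬝ᵥ a i) ^ 2)
      = Real.exp (t * eig (M ω) j) * ∑ i, π i * (a i ⬝ᵥ evec (M ω) j) ^ 2 := by
        rw [Finset.mul_sum]
        exact Finset.sum_congr rfl fun i _ => by rw [dotProduct_comm]; ring
    _ = _ := by rw [this, mul_one]

lemma Ex_qE_gram_le (hπ : ∀ i, 0 ≤ π i) (hs : ∑ i, π i = 1)
    (hiso : ∀ x, ∑ i, π i * (a i ⬝ᵥ x) ^ 2 = x ⬝ᵥ x) (hL : ∀ i, a i ⬝ᵥ a i ≤ L)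
    {t : ℝ} (ht : 0 ≤ t) (s : Fin m) :
    Ex π (fun ω : Fin m → Fin n => qE t (gram a ω) (a (ω s)))
      ≤ Real.exp (t * (L / m)) * Ex π (fun ω : Fin m → Fin n => trE t (gram a ω)) := by
  have hq : ∀ i, (m : ℝ)⁻¹ * (a i ⬝ᵥ a i) ≤ L / m := fun i => by
    rw [div_eq_inv_mul]
    exact mul_le_mul_of_nonneg_left (hL i) (inv_nonneg.mpr (Nat.cast_nonneg _))
  have h1 : Ex π (fun ω : Fin m → Fin n => qE t (gram a ω) (a (ω s)))
      ≤ Ex π (fun ω : Fin m → Fin n =>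
        Real.exp (t * (L / m)) * qE t (gramOn a (Finset.univ.erase s) ω) (a (ω s))) :=
    Ex_mono hπ fun ω => qE_rank_one_le (gramOn_isHermitian _ _) (gramOn_isHermitian _ _) _
      (inv_nonneg.mpr (Nat.cast_nonneg m)) (hq _) ht (gram_eq_add s ω)
  refine h1.trans ?_
  rw [Ex_const_mul, Ex_qE_erase hs hiso t s _ (fun ω => gramOn_isHermitian _ _)
    (fun ω i => gramOn_erase_update s ω i)]
  refine mul_le_mul_of_nonneg_left (Ex_mono hπ fun ω => ?_) (Real.exp_pos _).le
  have := trE_le (q := 0) (gramOn_isHermitian (a := a) (Finset.univ.erase s) ω)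
    (gramOn_isHermitian (a := a) Finset.univ ω) ht (fun x => by
      rw [gram_quad_split s]
      have h2 : 0 ≤ (m : ℝ)⁻¹ * (a (ω s) ⬝ᵥ x) ^ 2 := by positivity
      linarith)
  simpa using this

lemma Ex_trE_neg_gram_le (hπ : ∀ i, 0 ≤ π i) (hs : ∑ i, π i = 1)
    (hiso : ∀ x, ∑ i, π i * (a i ⬝ᵥ x) ^ 2 = x ⬝ᵥ x) (hL : ∀ i, a i ⬝ᵥ a i ≤ L)
    {t : ℝ} (ht : 0 ≤ t) (s : Fin m) :
    Ex π (fun ω : Fin m → Fin n => trE t (-gram a ω))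
      ≤ Real.exp (t * (L / m)) *
        Ex π (fun ω : Fin m → Fin n => qE t (-gram a ω) (a (ω s))) := by
  have hq : ∀ i, (m : ℝ)⁻¹ * (a i ⬝ᵥ a i) ≤ L / m := fun i => by
    rw [div_eq_inv_mul]
    exact mul_le_mul_of_nonneg_left (hL i) (inv_nonneg.mpr (Nat.cast_nonneg _))
  have h1 : Ex π (fun ω : Fin m → Fin n => trE t (-gram a ω))
      ≤ Ex π (fun ω : Fin m → Fin n => trE t (-gramOn a (Finset.univ.erase s) ω)) := by
    refine Ex_mono hπ fun ω => ?_
    have := trE_le (q := 0) (gramOn_isHermitian (a := a) Finset.univ ω).neg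
      (gramOn_isHermitian (a := a) (Finset.univ.erase s) ω).neg ht (fun x => by
        rw [neg_mulVec, neg_mulVec, dotProduct_neg, dotProduct_neg, gram_quad_split s]
        have h2 : 0 ≤ (m : ℝ)⁻¹ * (a (ω s) ⬝ᵥ x) ^ 2 := by positivity
        linarith)
    simpa using this
  refine h1.trans ?_
  rw [← Ex_qE_erase hs hiso t s _ (fun ω => (gramOn_isHermitian _ _).neg)
    (fun ω i => by rw [gramOn_erase_update s ω i]), ← Ex_const_mul]
  refine Ex_mono hπ fun ω => ?_
  refine qE_rank_one_le (gramOn_isHermitian _ _).neg (gramOn_isHermitian _ _).neg _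
      (inv_nonneg.mpr (Nat.cast_nonneg m)) (hq _) ht (fun x => ?_)
  rw [neg_mulVec, neg_mulVec, gram_eq_add s]
  abel

lemma hasDerivAt_Ex_trE (M : (Fin m → Fin n) → Matrix (Fin p) (Fin p) ℝ) (t : ℝ) :
    HasDerivAt (fun t => Ex π (fun ω => trE t (M ω)))
      (Ex π (fun ω => ∑ j, Real.exp (t * eig (M ω) j) * eig (M ω) j)) t := by
  unfold Ex trE
  refine HasDerivAt.fun_sum fun ω _ => HasDerivAt.const_mul _ (HasDerivAt.fun_sum fun j _ => ?_)
  simpa using ((hasDerivAt_id t).mul_const (eig (M ω) j)).exp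

/-- `tr (M exp (t M))` for `M = σ W` with `W` the sampled Gram matrix. -/
lemma sum_exp_mul_eig {M : Matrix (Fin p) (Fin p) ℝ} (hM : M.IsHermitian) (σ t : ℝ)
    (ω : Fin m → Fin n) (hσ : ∀ x, x ⬝ᵥ (M *ᵥ x) = σ * (x ⬝ᵥ (gram a ω *ᵥ x))) :
    ∑ j, Real.exp (t * eig M j) * eig M j
      = σ * ((m : ℝ)⁻¹ * ∑ s, qE t M (a (ω s))) := by
  have h : ∀ j, eig M j = σ * ((m : ℝ)⁻¹ * ∑ s, (a (ω s) ⬝ᵥ evec M j) ^ 2) := by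
    intro j
    rw [← gramOn_quad, ← hσ, evec_quad hM]
  unfold qE
  rw [Finset.sum_comm, Finset.mul_sum, Finset.mul_sum]
  refine Finset.sum_congr rfl fun j _ => ?_
  nth_rewrite 2 [h j]
  rw [← Finset.mul_sum]
  simp only [dotProduct_comm (evec M j)]
  ring

lemma Ex_trE_zero (hs : ∑ i, π i = 1) (M : (Fin m → Fin n) → Matrix (Fin p) (Fin p) ℝ) :
    Ex π (fun ω => trE 0 (M ω)) = p := by
  have h0 : ∀ ω, trE 0 (M ω) = p := fun ω => by simp [trE]
  have h1 := Ex_const_mul (π := π) (p : ℝ) (fun _ : Fin m → Fin n => 1)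
  rw [Ex_one hs, mul_one] at h1
  simpa [h0] using h1

/-- Upper matrix Chernoff moment: `𝔼 tr exp (t W) ≤ p exp (e t)` for `t L ≤ m`. -/
lemma Ex_trE_gram (hπ : ∀ i, 0 ≤ π i) (hs : ∑ i, π i = 1)
    (hiso : ∀ x, ∑ i, π i * (a i ⬝ᵥ x) ^ 2 = x ⬝ᵥ x) (hL : ∀ i, a i ⬝ᵥ a i ≤ L) (hL0 : 0 ≤ L)
    (hm : 0 < m) {T : ℝ} (hT : 0 ≤ T) (hTL : T * (L / m) ≤ 1) :
    Ex π (fun ω : Fin m → Fin n => trE T (gram a ω)) ≤ p * Real.exp (Real.exp 1 * T) := by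
  have hmR : (0 : ℝ) < m := Nat.cast_pos.mpr hm
  have h := gronwall_linear (c := Real.exp 1) hT
    (fun t => hasDerivAt_Ex_trE (π := π) (m := m) (fun ω => gram a ω) t) (fun t ht htT => ?_)
  · rwa [Ex_trE_zero hs] at h
  · have e : ∀ ω : Fin m → Fin n, ∑ j, Real.exp (t * eig (gram a ω) j) * eig (gram a ω) j
        = (m : ℝ)⁻¹ * ∑ s, qE t (gram a ω) (a (ω s)) := fun ω => by
      rw [sum_exp_mul_eig (gramOn_isHermitian _ _) 1 t ω (fun x => (one_mul _).symm), one_mul]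
    simp only [e, Ex_const_mul, Ex_sum]
    have hF0 : 0 ≤ Ex π (fun ω : Fin m → Fin n => trE t (gram a ω)) :=
      Ex_nonneg hπ fun ω => Finset.sum_nonneg fun j _ => (Real.exp_pos _).le
    have h1 : ∀ s ∈ (Finset.univ : Finset (Fin m)),
        Ex π (fun ω : Fin m → Fin n => qE t (gram a ω) (a (ω s)))
        ≤ Real.exp 1 * Ex π (fun ω : Fin m → Fin n => trE t (gram a ω)) := fun s _ =>
      (Ex_qE_gram_le hπ hs hiso hL ht s).trans (mul_le_mul_of_nonneg_right
        (Real.exp_le_exp.mpr ((mul_le_mul_of_nonneg_right htT (by positivity)).trans hTL)) hF0)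
    have h2 := Finset.sum_le_sum h1
    rw [Finset.sum_const, Finset.card_univ, Fintype.card_fin, nsmul_eq_mul] at h2
    rw [inv_mul_le_iff₀ hmR]
    exact h2

/-- Lower matrix Chernoff moment: `𝔼 tr exp (-t W) ≤ p exp (-t / e)` for `t L ≤ m`. -/
lemma Ex_trE_neg_gram (hπ : ∀ i, 0 ≤ π i) (hs : ∑ i, π i = 1)
    (hiso : ∀ x, ∑ i, π i * (a i ⬝ᵥ x) ^ 2 = x ⬝ᵥ x) (hL : ∀ i, a i ⬝ᵥ a i ≤ L) (hL0 : 0 ≤ L)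
    (hm : 0 < m) {T : ℝ} (hT : 0 ≤ T) (hTL : T * (L / m) ≤ 1) :
    Ex π (fun ω : Fin m → Fin n => trE T (-gram a ω))
      ≤ p * Real.exp (-Real.exp (-1) * T) := by
  have hmR : (0 : ℝ) < m := Nat.cast_pos.mpr hm
  have h := gronwall_linear (c := -Real.exp (-1)) hT
    (fun t => hasDerivAt_Ex_trE (π := π) (m := m) (fun ω => -gram a ω) t) (fun t ht htT => ?_)
  · rwa [Ex_trE_zero hs] at h
  · have e : ∀ ω : Fin m → Fin n, ∑ j, Real.exp (t * eig (-gram a ω) j) * eig (-gram a ω) j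
        = (-1) * ((m : ℝ)⁻¹ * ∑ s, qE t (-gram a ω) (a (ω s))) := fun ω =>
      sum_exp_mul_eig (gramOn_isHermitian _ _).neg (-1) t ω (fun x => by
        rw [neg_mulVec, dotProduct_neg]; ring)
    simp only [e, Ex_const_mul, Ex_sum]
    have h1 : ∀ s ∈ (Finset.univ : Finset (Fin m)),
        Real.exp (-1) * Ex π (fun ω : Fin m → Fin n => trE t (-gram a ω))
        ≤ Ex π (fun ω : Fin m → Fin n => qE t (-gram a ω) (a (ω s))) := fun s _ => by
      have hQ0 : 0 ≤ Ex π (fun ω : Fin m → Fin n => qE t (-gram a ω) (a (ω s))) :=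
        Ex_nonneg hπ fun ω => Finset.sum_nonneg fun j _ =>
          mul_nonneg (Real.exp_pos _).le (sq_nonneg _)
      have h3 := (Ex_trE_neg_gram_le hπ hs hiso hL ht s).trans (mul_le_mul_of_nonneg_right
        (Real.exp_le_exp.mpr ((mul_le_mul_of_nonneg_right htT (by positivity)).trans hTL)) hQ0)
      have h4 := mul_le_mul_of_nonneg_left h3 (Real.exp_pos (-1)).le
      rw [← mul_assoc, ← Real.exp_add] at h4
      simpa using h4
    have h2 := Finset.sum_le_sum h1
    rw [Finset.sum_const, Finset.card_univ, Fintype.card_fin, nsmul_eq_mul] at h2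
    have h5 := mul_le_mul_of_nonneg_left h2 (inv_pos.mpr hmR).le
    rw [← mul_assoc, inv_mul_cancel₀ hmR.ne', one_mul] at h5
    linarith

end Chernoff

/-! ### Second moments of the sampled score vector -/

/-- The sampled score vector `g = m⁻¹ ∑ₛ ρ_{ω s} a_{ω s}`. -/
def score {n m p : ℕ} (a : Fin n → Fin p → ℝ) (ρ : Fin n → ℝ) (ω : Fin m → Fin n) : Fin p → ℝ :=
  (m : ℝ)⁻¹ • ∑ s, ρ (ω s) • a (ω s)

/-- The deviation `(W - 1) x` of the sampled Gram matrix `W` from its mean, applied to `x`. -/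
def dev {n m p : ℕ} (a : Fin n → Fin p → ℝ) (ω : Fin m → Fin n) (x : Fin p → ℝ) : Fin p → ℝ :=
  gram a ω *ᵥ x - x

section Moments

variable {n m p : ℕ} {π : Fin n → ℝ} {a : Fin n → Fin p → ℝ} {ρ : Fin n → ℝ} {L R : ℝ}

lemma wsum_mul_sq_le (hπ : ∀ i, 0 ≤ π i) (f g : Fin n → ℝ) :
    (∑ i, π i * (f i * g i)) ^ 2 ≤ (∑ i, π i * f i ^ 2) * ∑ i, π i * g i ^ 2 := by
  have h := Finset.sum_mul_sq_le_sq_mul_sq Finset.univ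
    (fun i => Real.sqrt (π i) * f i) (fun i => Real.sqrt (π i) * g i)
  have e : ∀ i, Real.sqrt (π i) * f i * (Real.sqrt (π i) * g i) = π i * (f i * g i) := fun i => by
    rw [mul_mul_mul_comm, Real.mul_self_sqrt (hπ i)]
  simpa only [e, mul_pow, Real.sq_sqrt (hπ _)] using h

lemma dot_self_eq_sum (v : Fin p → ℝ) :
    v ⬝ᵥ v = ∑ k, (v ⬝ᵥ (Pi.single k 1 : Fin p → ℝ)) ^ 2 := by
  simp only [dotProduct_single_one, sq]
  rfl

lemma score_dot (ω : Fin m → Fin n) (x : Fin p → ℝ) :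
    score a ρ ω ⬝ᵥ x = (m : ℝ)⁻¹ * ∑ s, ρ (ω s) * (a (ω s) ⬝ᵥ x) := by
  rw [score, smul_dotProduct, sum_dotProduct, smul_eq_mul]
  simp only [smul_dotProduct, smul_eq_mul]

lemma dev_dot (hm : 0 < m) (ω : Fin m → Fin n) (x y : Fin p → ℝ) :
    dev a ω x ⬝ᵥ y = (m : ℝ)⁻¹ * ∑ s, ((a (ω s) ⬝ᵥ x) * (a (ω s) ⬝ᵥ y) - x ⬝ᵥ y) := by
  have hmR : (m : ℝ) ≠ 0 := Nat.cast_ne_zero.mpr hm.ne'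
  rw [dev, sub_dotProduct, gramOn_mulVec, smul_dotProduct, sum_dotProduct, smul_eq_mul,
    Finset.sum_sub_distrib, Finset.sum_const, Finset.card_univ, Fintype.card_fin, nsmul_eq_mul,
    mul_sub, inv_mul_cancel_left₀ hmR]
  simp only [smul_dotProduct, smul_eq_mul]

/-- `𝔼 ‖g‖² = m⁻¹ 𝔼 ρ² ‖a‖²`. -/
lemma Ex_score_sq (hs : ∑ i, π i = 1) (hm : 0 < m)
    (hmean : ∀ x, ∑ i, π i * (ρ i * (a i ⬝ᵥ x)) = 0) :
    Ex π (fun ω : Fin m → Fin n => score a ρ ω ⬝ᵥ score a ρ ω)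
      = (m : ℝ)⁻¹ * ∑ i, π i * (ρ i ^ 2 * (a i ⬝ᵥ a i)) := by
  have hmR : (m : ℝ) ≠ 0 := Nat.cast_ne_zero.mpr hm.ne'
  simp only [dot_self_eq_sum (score a ρ _), score_dot, mul_pow]
  rw [Ex_sum]
  simp only [Ex_const_mul]
  have h : ∀ k : Fin p, Ex π (fun ω : Fin m → Fin n =>
      (∑ s, ρ (ω s) * (a (ω s) ⬝ᵥ (Pi.single k 1 : Fin p → ℝ))) ^ 2)
      = m * ∑ i, π i * (ρ i * (a i ⬝ᵥ (Pi.single k 1 : Fin p → ℝ))) ^ 2 := by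
    intro k
    have := Ex_sum_sq (m := m) hs (fun i => ρ i * (a i ⬝ᵥ (Pi.single k 1 : Fin p → ℝ)))
    rw [hmean] at this
    rw [this]; ring
  simp only [h]
  rw [← Finset.mul_sum, ← Finset.mul_sum, Finset.sum_comm, ← mul_assoc]
  congr 1
  · field_simp
  · refine Finset.sum_congr rfl fun i _ => ?_
    rw [dot_self_eq_sum (a i), ← Finset.mul_sum]
    congr 1
    rw [Finset.mul_sum]
    exact Finset.sum_congr rfl fun k _ => by ring

lemma Ex_score_sq_le (hπ : ∀ i, 0 ≤ π i) (hs : ∑ i, π i = 1) (hm : 0 < m)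
    (hmean : ∀ x, ∑ i, π i * (ρ i * (a i ⬝ᵥ x)) = 0) (hL : ∀ i, a i ⬝ᵥ a i ≤ L) (hL0 : 0 ≤ L)
    (hR : ∑ i, π i * ρ i ^ 2 ≤ R) :
    Ex π (fun ω : Fin m → Fin n => score a ρ ω ⬝ᵥ score a ρ ω) ≤ L / m * R := by
  rw [Ex_score_sq hs hm hmean, div_eq_inv_mul, mul_assoc]
  refine mul_le_mul_of_nonneg_left ?_ (inv_nonneg.mpr (Nat.cast_nonneg m))
  refine le_trans ?_ (mul_le_mul_of_nonneg_left hR hL0)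
  rw [Finset.mul_sum]
  refine Finset.sum_le_sum fun i _ => ?_
  have := mul_le_mul_of_nonneg_left (hL i) (mul_nonneg (hπ i) (sq_nonneg (ρ i)))
  linarith

/-- Variance of the rank-one matrix `a aᵀ` applied to a vector. -/
lemma rank_one_var (hπ : ∀ i, 0 ≤ π i) (hs : ∑ i, π i = 1)
    (hiso : ∀ x y, ∑ i, π i * ((a i ⬝ᵥ x) * (a i ⬝ᵥ y)) = x ⬝ᵥ y) (hL : ∀ i, a i ⬝ᵥ a i ≤ L)
    (x : Fin p → ℝ) :
    ∑ k, ∑ i, π i * ((a i ⬝ᵥ x) * (a i ⬝ᵥ (Pi.single k 1 : Fin p → ℝ))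
        - x ⬝ᵥ (Pi.single k 1 : Fin p → ℝ)) ^ 2 ≤ L * (x ⬝ᵥ x) := by
  rw [Finset.sum_comm]
  have h : ∀ i, ∑ k, π i * ((a i ⬝ᵥ x) * (a i ⬝ᵥ (Pi.single k 1 : Fin p → ℝ))
        - x ⬝ᵥ (Pi.single k 1 : Fin p → ℝ)) ^ 2
      = π i * ((a i ⬝ᵥ x) * (a i ⬝ᵥ x)) * (a i ⬝ᵥ a i)
        - 2 * (π i * ((a i ⬝ᵥ x) * (a i ⬝ᵥ x))) + π i * (x ⬝ᵥ x) := by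
    intro i
    have e1 : ∑ k, (a i ⬝ᵥ (Pi.single k 1 : Fin p → ℝ)) * (x ⬝ᵥ (Pi.single k 1 : Fin p → ℝ))
        = a i ⬝ᵥ x := by
      simp only [dotProduct_single_one]
      rfl
    have e2 := dot_self_eq_sum (a i)
    have e3 := dot_self_eq_sum x
    rw [← Finset.mul_sum, mul_assoc, ← mul_assoc 2, mul_comm 2, mul_assoc (π i), ← mul_sub,
      ← mul_add]
    congr 1
    have e4 : ∀ k, ((a i ⬝ᵥ x) * (a i ⬝ᵥ (Pi.single k 1 : Fin p → ℝ))
        - x ⬝ᵥ (Pi.single k 1 : Fin p → ℝ)) ^ 2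
        = (a i ⬝ᵥ x) * (a i ⬝ᵥ x) * (a i ⬝ᵥ (Pi.single k 1 : Fin p → ℝ)) ^ 2
          - 2 * (a i ⬝ᵥ x) * ((a i ⬝ᵥ (Pi.single k 1 : Fin p → ℝ))
            * (x ⬝ᵥ (Pi.single k 1 : Fin p → ℝ)))
          + (x ⬝ᵥ (Pi.single k 1 : Fin p → ℝ)) ^ 2 := fun k => by ring
    simp only [e4, Finset.sum_add_distrib, Finset.sum_sub_distrib, ← Finset.mul_sum]
    rw [e1, ← e2, ← e3]
    ring
  simp only [h, Finset.sum_add_distrib, Finset.sum_sub_distrib, ← Finset.mul_sum,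
    ← Finset.sum_mul]
  rw [hiso, hs]
  have h2 : ∑ i, π i * ((a i ⬝ᵥ x) * (a i ⬝ᵥ x)) * (a i ⬝ᵥ a i)
      ≤ ∑ i, L * (π i * ((a i ⬝ᵥ x) * (a i ⬝ᵥ x))) :=
    Finset.sum_le_sum fun i _ => by
      have := mul_le_mul_of_nonneg_left (hL i) (mul_nonneg (hπ i) (mul_self_nonneg (a i ⬝ᵥ x)))
      linarith
  rw [← Finset.mul_sum, hiso] at h2
  have := dot_self_nonneg x
  linarith

lemma Ex_dev_sq_le (hπ : ∀ i, 0 ≤ π i) (hs : ∑ i, π i = 1) (hm : 0 < m)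
    (hiso : ∀ x y, ∑ i, π i * ((a i ⬝ᵥ x) * (a i ⬝ᵥ y)) = x ⬝ᵥ y) (hL : ∀ i, a i ⬝ᵥ a i ≤ L)
    (x : Fin p → ℝ) :
    Ex π (fun ω : Fin m → Fin n => dev a ω x ⬝ᵥ dev a ω x) ≤ L / m * (x ⬝ᵥ x) := by
  have hmR : (0 : ℝ) < m := Nat.cast_pos.mpr hm
  simp only [dot_self_eq_sum (dev a _ x), dev_dot hm, mul_pow]
  rw [Ex_sum]
  simp only [Ex_const_mul]
  have h : ∀ k : Fin p, Ex π (fun ω : Fin m → Fin n =>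
      (∑ s, ((a (ω s) ⬝ᵥ x) * (a (ω s) ⬝ᵥ (Pi.single k 1 : Fin p → ℝ))
        - x ⬝ᵥ (Pi.single k 1 : Fin p → ℝ))) ^ 2)
      = m * ∑ i, π i * ((a i ⬝ᵥ x) * (a i ⬝ᵥ (Pi.single k 1 : Fin p → ℝ))
        - x ⬝ᵥ (Pi.single k 1 : Fin p → ℝ)) ^ 2 := by
    intro k
    have := Ex_sum_sq (m := m) hs (fun i => (a i ⬝ᵥ x) * (a i ⬝ᵥ (Pi.single k 1 : Fin p → ℝ))
        - x ⬝ᵥ (Pi.single k 1 : Fin p → ℝ))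
    have h0 : ∑ i, π i * ((a i ⬝ᵥ x) * (a i ⬝ᵥ (Pi.single k 1 : Fin p → ℝ))
        - x ⬝ᵥ (Pi.single k 1 : Fin p → ℝ)) = 0 := by
      simp only [mul_sub, Finset.sum_sub_distrib, hiso, ← Finset.sum_mul, hs]
      ring
    rw [h0] at this
    rw [this]; ring
  simp only [h]
  rw [← Finset.mul_sum, ← Finset.mul_sum, ← mul_assoc]
  have hv := rank_one_var hπ hs hiso hL x
  calc _ ≤ ((m : ℝ)⁻¹ ^ 2 * m) * (L * (x ⬝ᵥ x)) :=
        mul_le_mul_of_nonneg_left hv (by positivity)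
    _ = _ := by field_simp

/-- The kernel of the decoupled part of `⟨(W - 1) g, x⟩`. -/
def devKernel (a : Fin n → Fin p → ℝ) (ρ : Fin n → ℝ) (x : Fin p → ℝ) (i j : Fin n) : ℝ :=
  ρ j * ((a i ⬝ᵥ a j) * (a i ⬝ᵥ x) - a j ⬝ᵥ x)

lemma dev_score_dot (hm : 0 < m) (ω : Fin m → Fin n) (x : Fin p → ℝ) :
    dev a ω (score a ρ ω) ⬝ᵥ x = (m : ℝ)⁻¹ ^ 2 *
      (∑ s, ρ (ω s) * ((a (ω s) ⬝ᵥ a (ω s) - 1) * (a (ω s) ⬝ᵥ x))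
        + ∑ q ∈ (Finset.univ : Finset (Fin m)).offDiag, devKernel a ρ x (ω q.1) (ω q.2)) := by
  have hmR : (m : ℝ) ≠ 0 := Nat.cast_ne_zero.mpr hm.ne'
  have h1 : ∑ s, ρ (ω s) * ((a (ω s) ⬝ᵥ a (ω s) - 1) * (a (ω s) ⬝ᵥ x))
      = ∑ q ∈ (Finset.univ : Finset (Fin m)).diag, devKernel a ρ x (ω q.1) (ω q.2) := by
    refine Eq.trans ?_ (Finset.sum_diag Finset.univ
      (fun q : Fin m × Fin m => devKernel a ρ x (ω q.1) (ω q.2))).symm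
    exact Finset.sum_congr rfl fun s _ => by simp only [devKernel]; ring
  rw [h1, ← Finset.sum_union (Finset.disjoint_diag_offDiag (Finset.univ : Finset (Fin m))), Finset.diag_union_offDiag,
    Finset.sum_product, dev_dot hm, score_dot, sq, mul_assoc]
  congr 1
  conv_rhs => rw [Finset.mul_sum]
  refine Finset.sum_congr rfl fun s _ => ?_
  rw [dotProduct_comm (a (ω s)) (score a ρ ω), score_dot, mul_assoc, ← mul_sub]
  congr 1
  rw [Finset.sum_mul, ← Finset.sum_sub_distrib]
  refine Finset.sum_congr rfl fun t _ => ?_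
  rw [devKernel, dotProduct_comm (a (ω t)) (a (ω s))]
  ring

lemma devKernel_left (hs : ∑ i, π i = 1)
    (hiso : ∀ x y, ∑ i, π i * ((a i ⬝ᵥ x) * (a i ⬝ᵥ y)) = x ⬝ᵥ y) (x : Fin p → ℝ) (j : Fin n) :
    ∑ i, π i * devKernel a ρ x i j = 0 := by
  have e : ∀ i, π i * devKernel a ρ x i j
      = ρ j * (π i * ((a i ⬝ᵥ a j) * (a i ⬝ᵥ x))) - π i * (ρ j * (a j ⬝ᵥ x)) := fun i => by
    rw [devKernel]; ring
  simp only [e, Finset.sum_sub_distrib, ← Finset.mul_sum, ← Finset.sum_mul, hiso, hs]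
  ring

lemma devKernel_right (hmean : ∀ x, ∑ i, π i * (ρ i * (a i ⬝ᵥ x)) = 0) (x : Fin p → ℝ)
    (i : Fin n) : ∑ j, π j * devKernel a ρ x i j = 0 := by
  have e : ∀ j, π j * devKernel a ρ x i j
      = (a i ⬝ᵥ x) * (π j * (ρ j * (a j ⬝ᵥ a i))) - π j * (ρ j * (a j ⬝ᵥ x)) := fun j => by
    rw [devKernel, dotProduct_comm (a j) (a i)]; ring
  simp only [e, Finset.sum_sub_distrib, ← Finset.mul_sum, hmean]
  ring

/-- Only the diagonal terms contribute to `𝔼 (W - 1) g`. -/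
lemma Ex_dev_score_dot (hs : ∑ i, π i = 1) (hm : 0 < m)
    (hiso : ∀ x y, ∑ i, π i * ((a i ⬝ᵥ x) * (a i ⬝ᵥ y)) = x ⬝ᵥ y) (x : Fin p → ℝ) :
    Ex π (fun ω : Fin m → Fin n => dev a ω (score a ρ ω) ⬝ᵥ x)
      = (m : ℝ)⁻¹ * ∑ i, π i * (ρ i * ((a i ⬝ᵥ a i - 1) * (a i ⬝ᵥ x))) := by
  have hmR : (m : ℝ) ≠ 0 := Nat.cast_ne_zero.mpr hm.ne'
  simp only [dev_score_dot hm, Ex_const_mul, Ex_add, Ex_sum]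
  have h0 : ∑ q ∈ (Finset.univ : Finset (Fin m)).offDiag,
      Ex π (fun ω : Fin m → Fin n => devKernel a ρ x (ω q.1) (ω q.2)) = 0 := by
    refine Finset.sum_eq_zero ?_
    rintro ⟨s, t⟩ hq
    have hst : s ≠ t := by simpa using hq
    rw [Ex_resample hs s]
    simp only [Function.update_self, Function.update_of_ne hst.symm, ← Ex_const_mul]
    rw [← Ex_sum]
    simp only [devKernel_left hs hiso]
    simp [Ex]
  have h1 : ∀ s : Fin m, Ex π (fun ω : Fin m → Fin n =>
      ρ (ω s) * ((a (ω s) ⬝ᵥ a (ω s) - 1) * (a (ω s) ⬝ᵥ x)))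
      = ∑ i, π i * (ρ i * ((a i ⬝ᵥ a i - 1) * (a i ⬝ᵥ x))) := fun s =>
    Ex_coord hs s (fun i => ρ i * ((a i ⬝ᵥ a i - 1) * (a i ⬝ᵥ x)))
  rw [h0]
  simp only [h1, Finset.sum_const, Finset.card_univ, Fintype.card_fin, nsmul_eq_mul]
  field_simp
  ring

/-- The first-order bias term. Since `𝔼 ρ a = 0`, any constant `c` may be subtracted from `‖a‖²`. -/
lemma first_order_le (hπ : ∀ i, 0 ≤ π i)
    (hiso : ∀ x y, ∑ i, π i * ((a i ⬝ᵥ x) * (a i ⬝ᵥ y)) = x ⬝ᵥ y)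
    (hmean : ∀ x, ∑ i, π i * (ρ i * (a i ⬝ᵥ x)) = 0) (hR : ∑ i, π i * ρ i ^ 2 ≤ R)
    {c K : ℝ} (hK : ∀ i, π i ≠ 0 → |a i ⬝ᵥ a i - c| ≤ K) (x : Fin p → ℝ) :
    (∑ i, π i * (ρ i * ((a i ⬝ᵥ a i - 1) * (a i ⬝ᵥ x)))) ^ 2 ≤ K ^ 2 * R * (x ⬝ᵥ x) := by
  have e : ∑ i, π i * (ρ i * ((a i ⬝ᵥ a i - 1) * (a i ⬝ᵥ x)))
      = ∑ i, π i * (ρ i * ((a i ⬝ᵥ a i - c) * (a i ⬝ᵥ x))) := by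
    have e1 : ∀ i, π i * (ρ i * ((a i ⬝ᵥ a i - 1) * (a i ⬝ᵥ x)))
        = π i * (ρ i * ((a i ⬝ᵥ a i - c) * (a i ⬝ᵥ x)))
          + (c - 1) * (π i * (ρ i * (a i ⬝ᵥ x))) := fun i => by ring
    simp only [e1, Finset.sum_add_distrib, ← Finset.mul_sum, hmean]
    ring
  rw [e]
  refine (wsum_mul_sq_le hπ _ _).trans ?_
  have h2 : ∑ i, π i * ((a i ⬝ᵥ a i - c) * (a i ⬝ᵥ x)) ^ 2 ≤ K ^ 2 * (x ⬝ᵥ x) := by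
    rw [← hiso x x, Finset.mul_sum]
    refine Finset.sum_le_sum fun i _ => ?_
    by_cases hi : π i = 0
    · rw [hi]; simp
    · have h3 : (a i ⬝ᵥ a i - c) ^ 2 ≤ K ^ 2 := sq_le_sq' (abs_le.mp (hK i hi)).1 (abs_le.mp (hK i hi)).2
      have := mul_le_mul_of_nonneg_left h3 (mul_nonneg (hπ i) (sq_nonneg (a i ⬝ᵥ x)))
      linarith
  have h4 : 0 ≤ ∑ i, π i * ((a i ⬝ᵥ a i - c) * (a i ⬝ᵥ x)) ^ 2 :=
    Finset.sum_nonneg fun i _ => mul_nonneg (hπ i) (sq_nonneg _)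
  have h5 : 0 ≤ ∑ i, π i * ρ i ^ 2 :=
    Finset.sum_nonneg fun i _ => mul_nonneg (hπ i) (sq_nonneg _)
  calc _ ≤ R * (K ^ 2 * (x ⬝ᵥ x)) := mul_le_mul hR h2 h4 (h5.trans hR)
    _ = _ := by ring

/-- `𝔼 ‖(W - 1) g‖² ≤ 8 (L / m)² R`, without logarithmic factors. -/
lemma Ex_dev_score_sq_le (hπ : ∀ i, 0 ≤ π i) (hs : ∑ i, π i = 1) (hm : 0 < m)
    (hiso : ∀ x y, ∑ i, π i * ((a i ⬝ᵥ x) * (a i ⬝ᵥ y)) = x ⬝ᵥ y)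
    (hmean : ∀ x, ∑ i, π i * (ρ i * (a i ⬝ᵥ x)) = 0) (hL : ∀ i, a i ⬝ᵥ a i ≤ L) (hL1 : 1 ≤ L)
    (hLm : L ≤ m) (hR : ∑ i, π i * ρ i ^ 2 ≤ R) :
    Ex π (fun ω : Fin m → Fin n => dev a ω (score a ρ ω) ⬝ᵥ dev a ω (score a ρ ω))
      ≤ 8 * (L / m) ^ 2 * R := by
  have hmR : (0 : ℝ) < m := Nat.cast_pos.mpr hm
  have hm1 : (1 : ℝ) ≤ m := hL1.trans hLm
  have hR0 : 0 ≤ R := le_trans (Finset.sum_nonneg fun i _ => mul_nonneg (hπ i) (sq_nonneg _)) hR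
  let e : Fin p → Fin p → ℝ := fun k => Pi.single k 1
  set f : Fin p → Fin n → ℝ := fun k i => ρ i * ((a i ⬝ᵥ a i - 1) * (a i ⬝ᵥ e k)) with hf
  set μ : Fin p → ℝ := fun k => ∑ i, π i * f k i with hμ
  -- contribution of the diagonal
  have hμ2 : ∑ k, μ k ^ 2 ≤ L ^ 2 * R := by
    have hx : ∀ x : Fin p → ℝ, ∑ i, π i * (ρ i * ((a i ⬝ᵥ a i - 1) * (a i ⬝ᵥ x))) = μ ⬝ᵥ x := by
      intro x
      have hax : ∀ i, a i ⬝ᵥ x = ∑ k, (a i ⬝ᵥ e k) * x k := fun i => by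
        simp only [e, dotProduct_single_one]
        rfl
      calc ∑ i, π i * (ρ i * ((a i ⬝ᵥ a i - 1) * (a i ⬝ᵥ x)))
          = ∑ i, ∑ k, π i * f k i * x k := by
            refine Finset.sum_congr rfl fun i _ => ?_
            rw [hax, Finset.mul_sum, Finset.mul_sum, Finset.mul_sum]
            exact Finset.sum_congr rfl fun k _ => by simp only [hf]; ring
        _ = ∑ k, ∑ i, π i * f k i * x k := Finset.sum_comm
        _ = ∑ k, μ k * x k := Finset.sum_congr rfl fun k _ => (Finset.sum_mul _ _ _).symm
        _ = μ ⬝ᵥ x := rfl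
    have h1 := first_order_le (a := a) hπ hiso hmean hR (c := 0) (K := L) (fun i _ => by
      rw [sub_zero, abs_of_nonneg (dot_self_nonneg _)]; exact hL i) μ
    rw [hx] at h1
    have h2 : μ ⬝ᵥ μ = ∑ k, μ k ^ 2 := by simp only [dotProduct, sq]
    rw [h2] at h1
    set N := ∑ k, μ k ^ 2
    have hN : 0 ≤ N := Finset.sum_nonneg fun k _ => sq_nonneg _
    rcases hN.eq_or_lt with h0 | h0
    · rw [← h0]; positivity
    · rw [sq] at h1
      exact le_of_mul_le_mul_right h1 h0
  have hdiag : ∑ k, Ex π (fun ω : Fin m → Fin n => (∑ s, f k (ω s)) ^ 2)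
      ≤ 2 * m ^ 2 * L ^ 2 * R := by
    simp only [Ex_sum_sq hs, Finset.sum_add_distrib, ← Finset.mul_sum]
    have h1 : ∑ k, ∑ i, π i * f k i ^ 2 ≤ L ^ 3 * R := by
      rw [Finset.sum_comm]
      calc ∑ i, ∑ k, π i * f k i ^ 2
          = ∑ i, π i * ρ i ^ 2 * ((a i ⬝ᵥ a i - 1) ^ 2 * (a i ⬝ᵥ a i)) := by
            refine Finset.sum_congr rfl fun i _ => ?_
            rw [← Finset.mul_sum, mul_assoc]
            congr 1
            have h1 : ∀ k, f k i ^ 2 = ρ i ^ 2 * (a i ⬝ᵥ a i - 1) ^ 2 * (a i ⬝ᵥ e k) ^ 2 :=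
              fun k => by simp only [hf]; ring
            rw [Finset.sum_congr rfl fun k _ => h1 k, ← Finset.mul_sum, ← dot_self_eq_sum (a i),
              mul_assoc]
        _ ≤ ∑ i, L ^ 3 * (π i * ρ i ^ 2) := by
            refine Finset.sum_le_sum fun i _ => ?_
            have h0 := dot_self_nonneg (a i)
            have h2 : (a i ⬝ᵥ a i - 1) ^ 2 ≤ L ^ 2 :=
              sq_le_sq' (by linarith) (by linarith [hL i])
            have h3 : (a i ⬝ᵥ a i - 1) ^ 2 * (a i ⬝ᵥ a i) ≤ L ^ 2 * L :=
              mul_le_mul h2 (hL i) h0 (sq_nonneg _)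
            have := mul_le_mul_of_nonneg_left h3 (mul_nonneg (hπ i) (sq_nonneg (ρ i)))
            linarith
        _ ≤ L ^ 3 * R := by
            rw [← Finset.mul_sum]
            exact mul_le_mul_of_nonneg_left hR (by positivity)
    have h2 : (m : ℝ) * (∑ k, ∑ i, π i * f k i ^ 2) ≤ m ^ 2 * L ^ 2 * R := by
      have h3 := mul_le_mul_of_nonneg_left h1 hmR.le
      have h4 := mul_le_mul_of_nonneg_right hLm (show 0 ≤ m * L ^ 2 * R by positivity)
      linarith
    have h5 : (m : ℝ) * (m - 1) * ∑ k, μ k ^ 2 ≤ m ^ 2 * L ^ 2 * R := by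
      have h6 : (m : ℝ) * (m - 1) ≤ m ^ 2 := by linarith [sq (m : ℝ)]
      have h7 := mul_le_mul h6 hμ2 (Finset.sum_nonneg fun k _ => sq_nonneg _) (sq_nonneg _)
      linarith
    linarith
  -- contribution of the decoupled part
  have hoff : ∑ k, Ex π (fun ω : Fin m → Fin n =>
      (∑ q ∈ (Finset.univ : Finset (Fin m)).offDiag, devKernel a ρ (e k) (ω q.1) (ω q.2)) ^ 2)
      ≤ 2 * m ^ 2 * (L ^ 2 * R) := by
    refine (Finset.sum_le_sum fun k _ => Ex_chaos_sq hπ hs _ (devKernel_left hs hiso (e k))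
      (devKernel_right hmean (e k))).trans ?_
    rw [← Finset.mul_sum]
    refine mul_le_mul_of_nonneg_left ?_ (by positivity)
    calc ∑ k, ∑ i, ∑ j, π i * π j * devKernel a ρ (e k) i j ^ 2
        = ∑ j, π j * ρ j ^ 2 * ∑ k, ∑ i,
            π i * ((a i ⬝ᵥ a j) * (a i ⬝ᵥ e k) - a j ⬝ᵥ e k) ^ 2 := by
          have : ∀ k, ∑ i, ∑ j, π i * π j * devKernel a ρ (e k) i j ^ 2
              = ∑ j, ∑ i, π i * π j * devKernel a ρ (e k) i j ^ 2 := fun k => Finset.sum_comm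
          simp only [this]
          rw [Finset.sum_comm]
          refine Finset.sum_congr rfl fun j _ => ?_
          rw [Finset.mul_sum]
          refine Finset.sum_congr rfl fun k _ => ?_
          rw [Finset.mul_sum]
          refine Finset.sum_congr rfl fun i _ => ?_
          rw [devKernel]; ring
      _ ≤ ∑ j, π j * ρ j ^ 2 * L ^ 2 := by
          refine Finset.sum_le_sum fun j _ =>
            mul_le_mul_of_nonneg_left ?_ (mul_nonneg (hπ j) (sq_nonneg _))
          refine (rank_one_var hπ hs hiso hL (a j)).trans ?_
          rw [sq]
          exact mul_le_mul_of_nonneg_left (hL j) (by linarith)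
      _ ≤ L ^ 2 * R := by
          rw [← Finset.sum_mul, mul_comm]
          exact mul_le_mul_of_nonneg_left hR (sq_nonneg _)
  have hpt : ∀ ω : Fin m → Fin n, dev a ω (score a ρ ω) ⬝ᵥ dev a ω (score a ρ ω)
      ≤ (2 * (m : ℝ)⁻¹ ^ 4) * (∑ k, (∑ s, f k (ω s)) ^ 2
        + ∑ k, (∑ q ∈ (Finset.univ : Finset (Fin m)).offDiag,
            devKernel a ρ (e k) (ω q.1) (ω q.2)) ^ 2) := by
    intro ω
    rw [dot_self_eq_sum (dev a ω _), ← Finset.sum_add_distrib, Finset.mul_sum]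
    refine Finset.sum_le_sum fun k _ => ?_
    rw [dev_score_dot hm]
    simp only [hf, e]
    set u := ∑ s, ρ (ω s) * ((a (ω s) ⬝ᵥ a (ω s) - 1) * (a (ω s) ⬝ᵥ Pi.single k 1))
    set v := ∑ q ∈ (Finset.univ : Finset (Fin m)).offDiag,
      devKernel a ρ (Pi.single k 1) (ω q.1) (ω q.2)
    have h1 : (u + v) ^ 2 ≤ 2 * (u ^ 2 + v ^ 2) := by nlinarith [sq_nonneg (u - v)]
    have h2 := mul_le_mul_of_nonneg_left h1 (show 0 ≤ (m : ℝ)⁻¹ ^ 4 by positivity)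
    calc ((m : ℝ)⁻¹ ^ 2 * (u + v)) ^ 2 = (m : ℝ)⁻¹ ^ 4 * (u + v) ^ 2 := by ring
      _ ≤ _ := h2
      _ = _ := by ring
  refine (Ex_mono hπ hpt).trans ?_
  rw [Ex_const_mul, Ex_add, Ex_sum, Ex_sum]
  have h9 := mul_le_mul_of_nonneg_left (add_le_add hdiag hoff)
    (show 0 ≤ 2 * (m : ℝ)⁻¹ ^ 4 by positivity)
  refine h9.trans (le_of_eq ?_)
  field_simp
  ring

end Moments

/-! ### The good event and its complement -/

/-- The event that every eigenvalue of the sampled Gram matrix is at least `1/4`. -/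
def goodSet {n p : ℕ} (m : ℕ) (a : Fin n → Fin p → ℝ) : Finset (Fin m → Fin n) :=
  Finset.univ.filter fun ω => ∀ j, eig (-gram a ω) j ≤ -(1 / 4)

/-- Indicator of the complement of `goodSet`. -/
def bad {n m p : ℕ} (a : Fin n → Fin p → ℝ) (ω : Fin m → Fin n) : ℝ :=
  if ω ∈ goodSet m a then 0 else 1

section Tail

variable {n m p : ℕ} {π : Fin n → ℝ} {a : Fin n → Fin p → ℝ} {ρ : Fin n → ℝ} {L R : ℝ}

lemma bad_nonneg (ω : Fin m → Fin n) : 0 ≤ bad a ω := by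
  unfold bad; split_ifs <;> norm_num

lemma bad_le_one (ω : Fin m → Fin n) : bad a ω ≤ 1 := by
  unfold bad; split_ifs <;> norm_num

lemma bad_sq (ω : Fin m → Fin n) : bad a ω ^ 2 = bad a ω := by
  unfold bad; split_ifs <;> norm_num

lemma good_quad {ω : Fin m → Fin n} (h : ω ∈ goodSet m a) (x : Fin p → ℝ) :
    1 / 4 * (x ⬝ᵥ x) ≤ x ⬝ᵥ (gram a ω *ᵥ x) := by
  have hg : ∀ j, eig (-gram a ω) j ≤ -(1 / 4) := by simpa [goodSet] using h
  have hH : (-gram a ω).IsHermitian := (gramOn_isHermitian _ _).neg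
  have h1 := quad_eq hH x
  have h2 : ∑ j, eig (-gram a ω) j * (evec (-gram a ω) j ⬝ᵥ x) ^ 2
      ≤ ∑ j, -(1 / 4) * (evec (-gram a ω) j ⬝ᵥ x) ^ 2 :=
    Finset.sum_le_sum fun j _ => mul_le_mul_of_nonneg_right (hg j) (sq_nonneg _)
  rw [← Finset.mul_sum, sum_evec_sq hH] at h2
  rw [neg_mulVec, dotProduct_neg] at h1
  linarith

lemma good_isUnit {ω : Fin m → Fin n} (h : ω ∈ goodSet m a) : IsUnit (gram a ω).det := by
  rw [← Matrix.isUnit_iff_isUnit_det, ← Matrix.mulVec_injective_iff_isUnit]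
  intro x y hxy
  have h0 : gram a ω *ᵥ (x - y) = 0 := by rw [mulVec_sub, sub_eq_zero]; exact hxy
  have h1 := good_quad h (x - y)
  rw [h0, dotProduct_zero] at h1
  have h2 := dot_self_nonneg (x - y)
  exact sub_eq_zero.mp (dotProduct_self_eq_zero.mp (by linarith))

lemma good_inv {ω : Fin m → Fin n} (h : ω ∈ goodSet m a) (x : Fin p → ℝ) :
    gram a ω *ᵥ ((gram a ω)⁻¹ *ᵥ x) = x := by
  rw [mulVec_mulVec, Matrix.mul_nonsing_inv _ (good_isUnit h), one_mulVec]

lemma good_inv_sq_le {ω : Fin m → Fin n} (h : ω ∈ goodSet m a) (x : Fin p → ℝ) :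
    ((gram a ω)⁻¹ *ᵥ x) ⬝ᵥ ((gram a ω)⁻¹ *ᵥ x) ≤ 16 * (x ⬝ᵥ x) := by
  set z := (gram a ω)⁻¹ *ᵥ x with hz
  have h1 := good_quad h z
  rw [good_inv h x] at h1
  have h2 := dot_sq_le z x
  have hz0 := dot_self_nonneg z
  have hx0 := dot_self_nonneg x
  rcases hz0.eq_or_lt with h0 | h0
  · rw [← h0]; positivity
  · have h3 : (1 / 4 * (z ⬝ᵥ z)) ^ 2 ≤ (z ⬝ᵥ x) ^ 2 := pow_le_pow_left₀ (by positivity) h1 2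
    have h4 : (z ⬝ᵥ z) * (z ⬝ᵥ z) ≤ (z ⬝ᵥ z) * (16 * (x ⬝ᵥ x)) := by nlinarith
    exact le_of_mul_le_mul_left h4 h0

/-- Exponential Markov bound for the indicator of the bad event. -/
lemma bad_le {t : ℝ} (ht : 0 ≤ t) (ω : Fin m → Fin n) :
    bad a ω ≤ Real.exp (t / 4) * trE t (-gram a ω) := by
  have hpos : 0 ≤ Real.exp (t / 4) * trE t (-gram a ω) :=
    mul_nonneg (Real.exp_pos _).le (Finset.sum_nonneg fun j _ => (Real.exp_pos _).le)
  unfold bad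
  split_ifs with h
  · exact hpos
  · have h' : ∃ j, -(1 / 4) < eig (-gram a ω) j := by simpa [goodSet] using h
    obtain ⟨j, hj⟩ := h'
    have h1 : Real.exp (t * eig (-gram a ω) j) ≤ trE t (-gram a ω) :=
      Finset.single_le_sum (f := fun j => Real.exp (t * eig (-gram a ω) j))
        (fun j _ => (Real.exp_pos _).le) (Finset.mem_univ j)
    refine le_trans ?_ (mul_le_mul_of_nonneg_left h1 (Real.exp_pos _).le)
    rw [← Real.exp_add]
    apply Real.one_le_exp
    nlinarith

/-- A trace-exponential bound on the quadratic form of the sampled Gram matrix. It comes from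
`x ≤ 3 + q exp ((x - 3) / q)`. -/
lemma gram_quad_le {q : ℝ} (hq : 0 < q) (ω : Fin m → Fin n) (x : Fin p → ℝ) :
    x ⬝ᵥ (gram a ω *ᵥ x)
      ≤ (3 + q * (Real.exp (-3 * q⁻¹) * trE q⁻¹ (gram a ω))) * (x ⬝ᵥ x) := by
  have hH : (gram a ω).IsHermitian := gramOn_isHermitian _ _
  rw [quad_eq hH, ← sum_evec_sq hH x, Finset.mul_sum]
  refine Finset.sum_le_sum fun j _ => mul_le_mul_of_nonneg_right ?_ (sq_nonneg _)
  have h1 : Real.exp (q⁻¹ * eig (gram a ω) j) ≤ trE q⁻¹ (gram a ω) :=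
    Finset.single_le_sum (f := fun j => Real.exp (q⁻¹ * eig (gram a ω) j))
      (fun j _ => (Real.exp_pos _).le) (Finset.mem_univ j)
  have h2 := mul_le_mul_of_nonneg_left h1 (Real.exp_pos (-3 * q⁻¹)).le
  rw [← Real.exp_add] at h2
  have h3 := Real.add_one_le_exp (-3 * q⁻¹ + q⁻¹ * eig (gram a ω) j)
  have h4 := mul_le_mul_of_nonneg_left (h3.trans h2) hq.le
  have h5 : q * (-3 * q⁻¹ + q⁻¹ * eig (gram a ω) j + 1) = -3 + eig (gram a ω) j + q := by
    field_simp
  linarith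

lemma score_sq_le (ω : Fin m → Fin n) {Λ : ℝ} (hΛ0 : 0 ≤ Λ)
    (hΛ : ∀ x, x ⬝ᵥ (gram a ω *ᵥ x) ≤ Λ * (x ⬝ᵥ x)) :
    score a ρ ω ⬝ᵥ score a ρ ω ≤ Λ * ((m : ℝ)⁻¹ * ∑ s, ρ (ω s) ^ 2) := by
  set g := score a ρ ω with hg
  have h1 : g ⬝ᵥ g = (m : ℝ)⁻¹ * ∑ s, ρ (ω s) * (a (ω s) ⬝ᵥ g) := score_dot ω g
  have h2 := hΛ g
  rw [gramOn_quad] at h2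
  have h3 := Finset.sum_mul_sq_le_sq_mul_sq Finset.univ (fun s => ρ (ω s))
    (fun s => a (ω s) ⬝ᵥ g)
  have hm0 : (0 : ℝ) ≤ (m : ℝ)⁻¹ := inv_nonneg.mpr (Nat.cast_nonneg m)
  have hS : 0 ≤ (m : ℝ)⁻¹ * ∑ s, ρ (ω s) ^ 2 :=
    mul_nonneg hm0 (Finset.sum_nonneg fun s _ => sq_nonneg _)
  have h4 : (g ⬝ᵥ g) ^ 2 ≤ ((m : ℝ)⁻¹ * ∑ s, ρ (ω s) ^ 2) * (Λ * (g ⬝ᵥ g)) := by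
    calc (g ⬝ᵥ g) ^ 2 = (m : ℝ)⁻¹ ^ 2 * (∑ s, ρ (ω s) * (a (ω s) ⬝ᵥ g)) ^ 2 := by
          rw [← mul_pow, ← h1]
      _ ≤ (m : ℝ)⁻¹ ^ 2 * ((∑ s, ρ (ω s) ^ 2) * ∑ s, (a (ω s) ⬝ᵥ g) ^ 2) :=
          mul_le_mul_of_nonneg_left h3 (sq_nonneg _)
      _ = ((m : ℝ)⁻¹ * ∑ s, ρ (ω s) ^ 2) * ((m : ℝ)⁻¹ * ∑ s, (a (ω s) ⬝ᵥ g) ^ 2) := by ring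
      _ ≤ _ := mul_le_mul_of_nonneg_left h2 hS
  rcases (dot_self_nonneg g).eq_or_lt with h0 | h0
  · rw [← h0]; exact mul_nonneg hΛ0 hS
  · refine le_of_mul_le_mul_right (le_trans (le_of_eq (sq _).symm) (h4.trans (le_of_eq ?_))) h0
    ring

/-- A functional that changes by at most a factor `e` when one draw is resampled is almost
uncorrelated with the weight `ρ²` of that draw. -/
lemma Ex_weight_mul_le (hπ : ∀ i, 0 ≤ π i) (hs : ∑ i, π i = 1) (hR : ∑ i, π i * ρ i ^ 2 ≤ R)
    (s : Fin m) {Ψ : (Fin m → Fin n) → ℝ} (hΨ0 : ∀ ω, 0 ≤ Ψ ω)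
    (hΨ : ∀ ω i, Ψ (Function.update ω s i) ≤ Real.exp 1 * Ψ ω) :
    Ex π (fun ω => ρ (ω s) ^ 2 * Ψ ω) ≤ Real.exp 1 * R * Ex π Ψ := by
  rw [Ex_resample hs s]
  simp only [Function.update_self, Ex_const_mul]
  have h0 : 0 ≤ Real.exp 1 * Ex π Ψ := mul_nonneg (Real.exp_pos _).le (Ex_nonneg hπ hΨ0)
  calc ∑ i, π i * (ρ i ^ 2 * Ex π (fun ω => Ψ (Function.update ω s i)))
      ≤ ∑ i, π i * ρ i ^ 2 * (Real.exp 1 * Ex π Ψ) := by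
        refine Finset.sum_le_sum fun i _ => ?_
        rw [← mul_assoc]
        refine mul_le_mul_of_nonneg_left ?_ (mul_nonneg (hπ i) (sq_nonneg _))
        rw [← Ex_const_mul]
        exact Ex_mono hπ fun ω => hΨ ω i
    _ ≤ R * (Real.exp 1 * Ex π Ψ) := by
        rw [← Finset.sum_mul]
        exact mul_le_mul_of_nonneg_right hR h0
    _ = _ := by ring

lemma Ex_trE_neg_tail (hπ : ∀ i, 0 ≤ π i) (hs : ∑ i, π i = 1)
    (hiso : ∀ x, ∑ i, π i * (a i ⬝ᵥ x) ^ 2 = x ⬝ᵥ x) (hL : ∀ i, a i ⬝ᵥ a i ≤ L) (hL0 : 0 < L)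
    (hm : 0 < m) :
    Ex π (fun ω : Fin m → Fin n =>
        Real.exp ((L / m)⁻¹ / 4) * trE (L / m)⁻¹ (-gram a ω))
      ≤ p * Real.exp (-(L / m)⁻¹ / 10) := by
  have hq : 0 < L / m := div_pos hL0 (Nat.cast_pos.mpr hm)
  have ht : 0 ≤ (L / m)⁻¹ := (inv_pos.mpr hq).le
  rw [Ex_const_mul]
  have h1 := Ex_trE_neg_gram (π := π) hπ hs hiso hL hL0.le hm ht (inv_mul_cancel₀ hq.ne').le
  have h2 := mul_le_mul_of_nonneg_left h1 (Real.exp_pos ((L / m)⁻¹ / 4)).le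
  refine h2.trans ?_
  rw [mul_left_comm, ← Real.exp_add]
  refine mul_le_mul_of_nonneg_left (Real.exp_le_exp.mpr ?_) (Nat.cast_nonneg p)
  have he : 7 / 20 ≤ Real.exp (-1) := by
    rw [Real.exp_neg, le_inv_comm₀ (by norm_num) (Real.exp_pos _)]
    linarith [Real.exp_one_lt_d9]
  nlinarith

lemma Ex_trE_tail (hπ : ∀ i, 0 ≤ π i) (hs : ∑ i, π i = 1)
    (hiso : ∀ x, ∑ i, π i * (a i ⬝ᵥ x) ^ 2 = x ⬝ᵥ x) (hL : ∀ i, a i ⬝ᵥ a i ≤ L) (hL0 : 0 < L)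
    (hm : 0 < m) :
    Ex π (fun ω : Fin m → Fin n =>
        Real.exp (-3 * (L / m)⁻¹) * trE (L / m)⁻¹ (gram a ω))
      ≤ p * Real.exp (-(L / m)⁻¹ / 10) := by
  have hq : 0 < L / m := div_pos hL0 (Nat.cast_pos.mpr hm)
  have ht : 0 ≤ (L / m)⁻¹ := (inv_pos.mpr hq).le
  rw [Ex_const_mul]
  have h1 := Ex_trE_gram (π := π) hπ hs hiso hL hL0.le hm ht (inv_mul_cancel₀ hq.ne').le
  have h2 := mul_le_mul_of_nonneg_left h1 (Real.exp_pos (-3 * (L / m)⁻¹)).le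
  refine h2.trans ?_
  rw [mul_left_comm, ← Real.exp_add]
  refine mul_le_mul_of_nonneg_left (Real.exp_le_exp.mpr ?_) (Nat.cast_nonneg p)
  have he : Real.exp 1 ≤ 29 / 10 := by linarith [Real.exp_one_lt_d9]
  nlinarith

/-- Exponentially small probability of the bad event. -/
lemma Ex_bad_le (hπ : ∀ i, 0 ≤ π i) (hs : ∑ i, π i = 1)
    (hiso : ∀ x, ∑ i, π i * (a i ⬝ᵥ x) ^ 2 = x ⬝ᵥ x) (hL : ∀ i, a i ⬝ᵥ a i ≤ L) (hL0 : 0 < L)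
    (hm : 0 < m) :
    Ex π (fun ω : Fin m → Fin n => bad a ω) ≤ p * Real.exp (-(L / m)⁻¹ / 10) :=
  (Ex_mono hπ fun ω => bad_le (inv_pos.mpr (div_pos hL0 (Nat.cast_pos.mpr hm))).le ω).trans
    (Ex_trE_neg_tail hπ hs hiso hL hL0 hm)

/-- The bad event contributes exponentially little to the second moment of the score. -/
lemma Ex_bad_score_sq_le (hπ : ∀ i, 0 ≤ π i) (hs : ∑ i, π i = 1)
    (hiso : ∀ x, ∑ i, π i * (a i ⬝ᵥ x) ^ 2 = x ⬝ᵥ x) (hL : ∀ i, a i ⬝ᵥ a i ≤ L) (hL0 : 0 < L)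
    (hm : 0 < m) (hLm : L ≤ m) (hR : ∑ i, π i * ρ i ^ 2 ≤ R) :
    Ex π (fun ω : Fin m → Fin n => bad a ω * (score a ρ ω ⬝ᵥ score a ρ ω))
      ≤ 12 * (p * Real.exp (-(L / m)⁻¹ / 10)) * R := by
  have hmR : (0 : ℝ) < m := Nat.cast_pos.mpr hm
  have hq : 0 < L / m := div_pos hL0 hmR
  have hq1 : L / m ≤ 1 := (div_le_one hmR).mpr hLm
  have hR0 : 0 ≤ R := le_trans (Finset.sum_nonneg fun i _ => mul_nonneg (hπ i) (sq_nonneg _)) hR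
  set q := L / m with hqdef
  have ht : 0 ≤ q⁻¹ := (inv_pos.mpr hq).le
  set η : ℝ := p * Real.exp (-q⁻¹ / 10) with hη
  set Ψ1 : (Fin m → Fin n) → ℝ := fun ω => Real.exp (q⁻¹ / 4) * trE q⁻¹ (-gram a ω) with hΨ1
  set Ψ2 : (Fin m → Fin n) → ℝ := fun ω => Real.exp (-3 * q⁻¹) * trE q⁻¹ (gram a ω) with hΨ2
  have h10 : ∀ ω, 0 ≤ Ψ1 ω := fun ω =>
    mul_nonneg (Real.exp_pos _).le (Finset.sum_nonneg fun j _ => (Real.exp_pos _).le)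
  have h20 : ∀ ω, 0 ≤ Ψ2 ω := fun ω =>
    mul_nonneg (Real.exp_pos _).le (Finset.sum_nonneg fun j _ => (Real.exp_pos _).le)
  have hE1 : Ex π Ψ1 ≤ η := Ex_trE_neg_tail hπ hs hiso hL hL0 hm
  have hE2 : Ex π Ψ2 ≤ η := Ex_trE_tail hπ hs hiso hL hL0 hm
  have hu1 : ∀ s ω i, Ψ1 (Function.update ω s i) ≤ Real.exp 1 * Ψ1 ω := fun s ω i => by
    have := mul_le_mul_of_nonneg_left (trE_neg_gram_update hL ht s i ω) (Real.exp_pos (q⁻¹ / 4)).le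
    rw [← hqdef, inv_mul_cancel₀ hq.ne'] at this
    simp only [hΨ1]
    linarith
  have hu2 : ∀ s ω i, Ψ2 (Function.update ω s i) ≤ Real.exp 1 * Ψ2 ω := fun s ω i => by
    have := mul_le_mul_of_nonneg_left (trE_gram_update hL ht s i ω) (Real.exp_pos (-3 * q⁻¹)).le
    rw [← hqdef, inv_mul_cancel₀ hq.ne'] at this
    simp only [hΨ2]
    linarith
  have hpt : ∀ ω : Fin m → Fin n, bad a ω * (score a ρ ω ⬝ᵥ score a ρ ω)
      ≤ (m : ℝ)⁻¹ * ∑ s, (3 * (ρ (ω s) ^ 2 * Ψ1 ω) + q * (ρ (ω s) ^ 2 * Ψ2 ω)) := by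
    intro ω
    have hΛ0 : 0 ≤ 3 + q * Ψ2 ω := by have := mul_nonneg hq.le (h20 ω); linarith
    have h1 := score_sq_le (ρ := ρ) ω hΛ0 (gram_quad_le hq ω)
    have h2 := mul_le_mul_of_nonneg_left h1 (bad_nonneg (a := a) ω)
    have h3 : bad a ω * (3 + q * Ψ2 ω) ≤ 3 * Ψ1 ω + q * Ψ2 ω := by
      have h4 : bad a ω ≤ Ψ1 ω := bad_le ht ω
      have h5 := mul_le_mul_of_nonneg_right (bad_le_one (a := a) ω) (mul_nonneg hq.le (h20 ω))
      linarith
    have hS : 0 ≤ (m : ℝ)⁻¹ * ∑ s, ρ (ω s) ^ 2 :=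
      mul_nonneg (inv_nonneg.mpr hmR.le) (Finset.sum_nonneg fun s _ => sq_nonneg _)
    have h6 := mul_le_mul_of_nonneg_right h3 hS
    calc bad a ω * (score a ρ ω ⬝ᵥ score a ρ ω)
        ≤ bad a ω * (3 + q * Ψ2 ω) * ((m : ℝ)⁻¹ * ∑ s, ρ (ω s) ^ 2) := by
          rw [mul_assoc]; exact h2
      _ ≤ _ := h6
      _ = _ := by
          rw [Finset.sum_add_distrib, ← Finset.mul_sum, ← Finset.mul_sum, ← Finset.sum_mul,
            ← Finset.sum_mul]
          ring
  refine (Ex_mono hπ hpt).trans ?_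
  rw [Ex_const_mul, Ex_sum]
  simp only [Ex_add, Ex_const_mul]
  have hη0 : 0 ≤ η := by positivity
  have hterm : ∀ s : Fin m, 3 * Ex π (fun ω : Fin m → Fin n => ρ (ω s) ^ 2 * Ψ1 ω)
      + q * Ex π (fun ω : Fin m → Fin n => ρ (ω s) ^ 2 * Ψ2 ω) ≤ 12 * η * R := by
    intro s
    have hw1 := Ex_weight_mul_le hπ hs hR s h10 (hu1 s)
    have hw2 := Ex_weight_mul_le hπ hs hR s h20 (hu2 s)
    have he : Real.exp 1 ≤ 3 := by linarith [Real.exp_one_lt_d9]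
    have he0 := Real.exp_pos 1
    have hb : ∀ E : ℝ, E ≤ η → Real.exp 1 * R * E ≤ 3 * R * η := fun E hE =>
      (mul_le_mul_of_nonneg_left hE (by positivity)).trans
        (mul_le_mul_of_nonneg_right (mul_le_mul_of_nonneg_right he hR0) hη0)
    have h1 := hw1.trans (hb _ hE1)
    have h2 := hw2.trans (hb _ hE2)
    have h3 := mul_le_mul_of_nonneg_left h2 hq.le
    have h4 := mul_le_mul_of_nonneg_right hq1 (show 0 ≤ 3 * R * η by positivity)
    linarith
  calc _ ≤ (m : ℝ)⁻¹ * ∑ s : Fin m, 12 * η * R :=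
        mul_le_mul_of_nonneg_left (Finset.sum_le_sum fun s _ => hterm s) (inv_nonneg.mpr hmR.le)
    _ = _ := by
        rw [Finset.sum_const, Finset.card_univ, Fintype.card_fin, nsmul_eq_mul,
          inv_mul_cancel_left₀ hmR.ne']

end Tail

/-! ### Bias and variance in whitened coordinates -/

/-- The subsampled solution `W⁻¹ g` in whitened coordinates. -/
def sol {n m p : ℕ} (a : Fin n → Fin p → ℝ) (ρ : Fin n → ℝ) (ω : Fin m → Fin n) : Fin p → ℝ :=
  (gram a ω)⁻¹ *ᵥ score a ρ ω

/-- The remainder `W⁻¹ (W - 1) g` of the first-order expansion of `sol`. -/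
def rem {n m p : ℕ} (a : Fin n → Fin p → ℝ) (ρ : Fin n → ℝ) (ω : Fin m → Fin n) : Fin p → ℝ :=
  (gram a ω)⁻¹ *ᵥ dev a ω (score a ρ ω)

section Core

variable {n m p : ℕ} {π : Fin n → ℝ} {a : Fin n → Fin p → ℝ} {ρ : Fin n → ℝ}

lemma sol_eq {ω : Fin m → Fin n} (h : ω ∈ goodSet m a) :
    sol a ρ ω = score a ρ ω - rem a ρ ω := by
  have h1 : (gram a ω)⁻¹ *ᵥ (gram a ω *ᵥ score a ρ ω) = score a ρ ω := by
    rw [mulVec_mulVec, Matrix.nonsing_inv_mul _ (good_isUnit h), one_mulVec]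
  rw [sol, rem, dev, mulVec_sub, h1]
  abel

lemma rem_dot {ω : Fin m → Fin n} (h : ω ∈ goodSet m a) (x : Fin p → ℝ) :
    rem a ρ ω ⬝ᵥ x = dev a ω (score a ρ ω) ⬝ᵥ x - dev a ω x ⬝ᵥ rem a ρ ω := by
  have h1 : gram a ω *ᵥ rem a ρ ω = dev a ω (score a ρ ω) := good_inv h _
  have h2 := dot_mulVec_symm (A := gram a ω) (gramOn_isHermitian _ _) (rem a ρ ω) x
  rw [h1] at h2
  have h3 : dev a ω x ⬝ᵥ rem a ρ ω = rem a ρ ω ⬝ᵥ (gram a ω *ᵥ x) - rem a ρ ω ⬝ᵥ x := by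
    rw [dotProduct_comm, dev, dotProduct_sub]
  rw [h3, h2]
  ring

lemma dot_abs_le (x y : Fin p → ℝ) : |x ⬝ᵥ y| ≤ Real.sqrt (x ⬝ᵥ x) * Real.sqrt (y ⬝ᵥ y) := by
  rw [← Real.sqrt_mul (dot_self_nonneg x)]
  exact Real.abs_le_sqrt (dot_sq_le x y)

lemma rem_norm_le {ω : Fin m → Fin n} (h : ω ∈ goodSet m a) :
    Real.sqrt (rem a ρ ω ⬝ᵥ rem a ρ ω)
      ≤ 4 * Real.sqrt (dev a ω (score a ρ ω) ⬝ᵥ dev a ω (score a ρ ω)) := by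
  rw [show (4 : ℝ) = Real.sqrt 16 by rw [show (16 : ℝ) = 4 ^ 2 by norm_num]; simp,
    ← Real.sqrt_mul (by norm_num)]
  exact Real.sqrt_le_sqrt (good_inv_sq_le h _)

variable {s ϱ κ : ℝ}

/-- The bias functional: on the good event, with `D = W - 1`,
`⟨W⁻¹ g, x⟩ = ⟨g, x⟩ - ⟨D g, x⟩ + ⟨D x, W⁻¹ D g⟩`, where the first term is centred and the second
one is nearly so. -/
lemma bias_core (hπ : ∀ i, 0 ≤ π i) (hs0 : 0 ≤ s) (hs1 : s ≤ 1) (hϱ : 0 ≤ ϱ)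
    (hP : Ex π (fun ω : Fin m → Fin n => bad a ω) ≤ (30 * s ^ 2) ^ 2)
    (hg0 : ∀ x, Ex π (fun ω : Fin m → Fin n => score a ρ ω ⬝ᵥ x) = 0)
    (hg : Ex π (fun ω : Fin m → Fin n => score a ρ ω ⬝ᵥ score a ρ ω) ≤ (s * ϱ) ^ 2)
    (hD : ∀ x, Ex π (fun ω : Fin m → Fin n => dev a ω x ⬝ᵥ dev a ω x) ≤ s ^ 2 * (x ⬝ᵥ x))
    (hDg : Ex π (fun ω : Fin m → Fin n => dev a ω (score a ρ ω) ⬝ᵥ dev a ω (score a ρ ω))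
      ≤ (3 * s ^ 2 * ϱ) ^ 2)
    (hfo : ∀ x, |Ex π (fun ω : Fin m → Fin n => dev a ω (score a ρ ω) ⬝ᵥ x)|
      ≤ κ * ϱ * Real.sqrt (x ⬝ᵥ x))
    (x : Fin p → ℝ) :
    |Ex π (fun ω : Fin m → Fin n => (1 - bad a ω) * (sol a ρ ω ⬝ᵥ x))|
      ≤ (132 * s ^ 3 + κ) * ϱ * Real.sqrt (x ⬝ᵥ x) := by
  set N := Real.sqrt (x ⬝ᵥ x) with hN
  have hN0 : 0 ≤ N := Real.sqrt_nonneg _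
  have hN2 : N ^ 2 = x ⬝ᵥ x := Real.sq_sqrt (dot_self_nonneg x)
  have hbad2 : Ex π (fun ω : Fin m → Fin n => bad a ω ^ 2) ≤ (30 * s ^ 2) ^ 2 := by
    simpa only [bad_sq] using hP
  have hdot : ∀ (f : (Fin m → Fin n) → Fin p → ℝ) (B : ℝ),
      Ex π (fun ω => f ω ⬝ᵥ f ω) ≤ B ^ 2 → Ex π (fun ω => (f ω ⬝ᵥ x) ^ 2) ≤ (B * N) ^ 2 := by
    intro f B hB
    have h1 : Ex π (fun ω => (f ω ⬝ᵥ x) ^ 2) ≤ Ex π (fun ω => (x ⬝ᵥ x) * (f ω ⬝ᵥ f ω)) :=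
      Ex_mono hπ fun ω => (dot_sq_le _ _).trans (le_of_eq (mul_comm _ _))
    rw [Ex_const_mul] at h1
    rw [mul_pow, hN2, mul_comm]
    exact h1.trans (mul_le_mul_of_nonneg_left hB (dot_self_nonneg x))
  have hb1 : Ex π (fun ω : Fin m → Fin n => |bad a ω * (score a ρ ω ⬝ᵥ x)|)
      ≤ 30 * s ^ 2 * (s * ϱ * N) :=
    Ex_abs_mul_le hπ (by positivity) (by positivity) hbad2 (hdot _ _ hg)
  have hb2 : Ex π (fun ω : Fin m → Fin n => |bad a ω * (dev a ω (score a ρ ω) ⬝ᵥ x)|)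
      ≤ 30 * s ^ 2 * (3 * s ^ 2 * ϱ * N) :=
    Ex_abs_mul_le hπ (by positivity) (by positivity) hbad2 (hdot _ _ hDg)
  have hb3 : Ex π (fun ω : Fin m → Fin n => |Real.sqrt (dev a ω x ⬝ᵥ dev a ω x) *
      Real.sqrt (dev a ω (score a ρ ω) ⬝ᵥ dev a ω (score a ρ ω))|)
      ≤ s * N * (3 * s ^ 2 * ϱ) := by
    refine Ex_abs_mul_le hπ (by positivity) (by positivity) ?_ ?_
    · simp only [Real.sq_sqrt (dot_self_nonneg _)]
      rw [mul_pow, hN2]; exact hD x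
    · simp only [Real.sq_sqrt (dot_self_nonneg _)]
      exact hDg
  have hb3' : Ex π (fun ω : Fin m → Fin n => |(1 - bad a ω) * (dev a ω x ⬝ᵥ rem a ρ ω)|)
      ≤ 4 * (s * N * (3 * s ^ 2 * ϱ)) := by
    refine le_trans ?_ (mul_le_mul_of_nonneg_left hb3 (by norm_num))
    rw [← Ex_const_mul]
    refine Ex_mono hπ fun ω => ?_
    by_cases h : ω ∈ goodSet m a
    · have h1 := dot_abs_le (dev a ω x) (rem a ρ ω)
      have h2 := mul_le_mul_of_nonneg_left (rem_norm_le (ρ := ρ) h)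
        (Real.sqrt_nonneg (dev a ω x ⬝ᵥ dev a ω x))
      rw [abs_of_nonneg (mul_nonneg (Real.sqrt_nonneg _) (Real.sqrt_nonneg _))]
      simp only [bad, h, if_true, sub_zero, one_mul]
      linarith
    · simp only [bad, h, if_false, sub_self, zero_mul, abs_zero]
      positivity
  have hexp : ∀ ω : Fin m → Fin n, (1 - bad a ω) * (sol a ρ ω ⬝ᵥ x)
      = (score a ρ ω ⬝ᵥ x) - bad a ω * (score a ρ ω ⬝ᵥ x)
        - (dev a ω (score a ρ ω) ⬝ᵥ x) + bad a ω * (dev a ω (score a ρ ω) ⬝ᵥ x)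
        + (1 - bad a ω) * (dev a ω x ⬝ᵥ rem a ρ ω) := by
    intro ω
    by_cases h : ω ∈ goodSet m a
    · rw [sol_eq h, sub_dotProduct, rem_dot h]
      simp only [bad, h, if_true]
      ring
    · simp only [bad, h, if_false]
      ring
  simp only [hexp]
  rw [Ex_add, Ex_add, Ex_sub, Ex_sub, hg0]
  have c1 := (abs_Ex_le hπ _).trans hb1
  have c2 := (abs_Ex_le hπ _).trans hb2
  have c3 := (abs_Ex_le hπ _).trans hb3'
  have c4 := hfo x
  have hs43 : s ^ 4 * (ϱ * N) ≤ s ^ 3 * (ϱ * N) :=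
    mul_le_mul_of_nonneg_right (pow_le_pow_of_le_one hs0 hs1 (by norm_num)) (by positivity)
  rw [abs_le] at c1 c2 c3 c4 ⊢
  constructor <;> linarith

/-- The second moment of `W⁻¹ g` on the good event agrees with that of `g` up to lower order. -/
lemma var_core (hπ : ∀ i, 0 ≤ π i) (hs0 : 0 ≤ s) (hs1 : s ≤ 1) (hϱ : 0 ≤ ϱ)
    (hP : Ex π (fun ω : Fin m → Fin n => bad a ω) ≤ (30 * s ^ 2) ^ 2)
    (hg : Ex π (fun ω : Fin m → Fin n => score a ρ ω ⬝ᵥ score a ρ ω) ≤ (s * ϱ) ^ 2)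
    (hgb : Ex π (fun ω : Fin m → Fin n => bad a ω * (score a ρ ω ⬝ᵥ score a ρ ω))
      ≤ 9600 * s ^ 4 * ϱ ^ 2)
    (hDg : Ex π (fun ω : Fin m → Fin n => dev a ω (score a ρ ω) ⬝ᵥ dev a ω (score a ρ ω))
      ≤ (3 * s ^ 2 * ϱ) ^ 2) :
    |Ex π (fun ω : Fin m → Fin n => (1 - bad a ω) * (sol a ρ ω ⬝ᵥ sol a ρ ω))
      - (1 - Ex π (fun ω : Fin m → Fin n => bad a ω)) *
        Ex π (fun ω : Fin m → Fin n => score a ρ ω ⬝ᵥ score a ρ ω)|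
      ≤ 10668 * s ^ 3 * ϱ ^ 2 := by
  set Γ : (Fin m → Fin n) → ℝ := fun ω => score a ρ ω ⬝ᵥ score a ρ ω with hΓ
  set Θ : (Fin m → Fin n) → ℝ := fun ω =>
    dev a ω (score a ρ ω) ⬝ᵥ dev a ω (score a ρ ω) with hΘ
  have hΓ0 : ∀ ω, 0 ≤ Γ ω := fun ω => dot_self_nonneg _
  have hΘ0 : ∀ ω, 0 ≤ Θ ω := fun ω => dot_self_nonneg _
  have hcross : Ex π (fun ω : Fin m → Fin n => |Real.sqrt (Γ ω) * Real.sqrt (Θ ω)|)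
      ≤ s * ϱ * (3 * s ^ 2 * ϱ) := by
    refine Ex_abs_mul_le hπ (by positivity) (by positivity) ?_ ?_
    · simp only [Real.sq_sqrt (hΓ0 _)]; exact hg
    · simp only [Real.sq_sqrt (hΘ0 _)]; exact hDg
  have hpt : ∀ ω : Fin m → Fin n,
      |(1 - bad a ω) * (sol a ρ ω ⬝ᵥ sol a ρ ω) - (1 - bad a ω) * Γ ω|
      ≤ 8 * |Real.sqrt (Γ ω) * Real.sqrt (Θ ω)| + 16 * Θ ω := by
    intro ω
    rw [abs_of_nonneg (mul_nonneg (Real.sqrt_nonneg _) (Real.sqrt_nonneg _))]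
    by_cases h : ω ∈ goodSet m a
    · have h1 := dot_abs_le (score a ρ ω) (rem a ρ ω)
      have h2 := mul_le_mul_of_nonneg_left (rem_norm_le (ρ := ρ) h)
        (Real.sqrt_nonneg (score a ρ ω ⬝ᵥ score a ρ ω))
      have h3 : rem a ρ ω ⬝ᵥ rem a ρ ω ≤ 16 * Θ ω := good_inv_sq_le h _
      have h4 := dot_self_nonneg (rem a ρ ω)
      have h5 : sol a ρ ω ⬝ᵥ sol a ρ ω - Γ ω
          = -2 * (score a ρ ω ⬝ᵥ rem a ρ ω) + rem a ρ ω ⬝ᵥ rem a ρ ω := by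
        rw [sol_eq h, sub_dotProduct, dotProduct_sub, dotProduct_sub,
          dotProduct_comm (rem a ρ ω) (score a ρ ω)]
        simp only [hΓ]
        ring
      simp only [bad, h, if_true, sub_zero, one_mul]
      rw [h5]
      have h6 := h1.trans h2
      rw [abs_le] at h6 ⊢
      change _ ≤ score a ρ ω ⬝ᵥ rem a ρ ω ∧ score a ρ ω ⬝ᵥ rem a ρ ω ≤
        Real.sqrt (Γ ω) * (4 * Real.sqrt (Θ ω)) at h6
      have h7 : -(Real.sqrt (Γ ω) * (4 * Real.sqrt (Θ ω))) ≤ score a ρ ω ⬝ᵥ rem a ρ ω := h6.1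
      constructor <;> linarith [h6.2]
    · simp only [bad, h, if_false, sub_self, zero_mul, abs_zero]
      have := hΘ0 ω
      positivity
  have h1 : |Ex π (fun ω : Fin m → Fin n => (1 - bad a ω) * (sol a ρ ω ⬝ᵥ sol a ρ ω))
      - Ex π (fun ω : Fin m → Fin n => (1 - bad a ω) * Γ ω)| ≤ 168 * s ^ 3 * ϱ ^ 2 := by
    rw [← Ex_sub]
    refine (abs_Ex_le hπ _).trans ((Ex_mono hπ hpt).trans ?_)
    rw [Ex_add, Ex_const_mul, Ex_const_mul]
    have hs43 : s ^ 4 * ϱ ^ 2 ≤ s ^ 3 * ϱ ^ 2 :=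
      mul_le_mul_of_nonneg_right (pow_le_pow_of_le_one hs0 hs1 (by norm_num)) (by positivity)
    linarith
  have h2 : Ex π (fun ω : Fin m → Fin n => (1 - bad a ω) * Γ ω)
      = Ex π Γ - Ex π (fun ω : Fin m → Fin n => bad a ω * Γ ω) := by
    rw [← Ex_sub]
    congr 1
    funext ω
    ring
  have h3 : 0 ≤ Ex π (fun ω : Fin m → Fin n => bad a ω * Γ ω) :=
    Ex_nonneg hπ fun ω => mul_nonneg (bad_nonneg ω) (hΓ0 ω)
  have h4 : 0 ≤ Ex π (fun ω : Fin m → Fin n => bad a ω) := Ex_nonneg hπ fun ω => bad_nonneg ω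
  have h5 : 0 ≤ Ex π Γ := Ex_nonneg hπ hΓ0
  have h6 : Ex π (fun ω : Fin m → Fin n => bad a ω) * Ex π Γ ≤ (30 * s ^ 2) ^ 2 * (s * ϱ) ^ 2 :=
    mul_le_mul hP hg h5 (sq_nonneg _)
  have h7 : 0 ≤ Ex π (fun ω : Fin m → Fin n => bad a ω) * Ex π Γ := mul_nonneg h4 h5
  have hs63 : s ^ 6 * ϱ ^ 2 ≤ s ^ 3 * ϱ ^ 2 :=
    mul_le_mul_of_nonneg_right (pow_le_pow_of_le_one hs0 hs1 (by norm_num)) (by positivity)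
  have hs43 : s ^ 4 * ϱ ^ 2 ≤ s ^ 3 * ϱ ^ 2 :=
    mul_le_mul_of_nonneg_right (pow_le_pow_of_le_one hs0 hs1 (by norm_num)) (by positivity)
  rw [h2] at h1
  rw [abs_le] at h1 ⊢
  constructor <;> linarith [h1.1, h1.2]

lemma sum_goodSet (F : (Fin m → Fin n) → ℝ) :
    ∑ ω ∈ goodSet m a, samplingP π ω * F ω = Ex π (fun ω => (1 - bad a ω) * F ω) := by
  rw [Ex, ← Finset.sum_subset (Finset.subset_univ (goodSet m a))]
  · refine Finset.sum_congr rfl fun ω h => ?_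
    simp only [bad, h, if_true]
    ring
  · intro ω _ h
    simp only [bad, h, if_false]
    ring

lemma eventProb_goodSet (hs : ∑ i, π i = 1) :
    eventProb (samplingP π) (goodSet m a)
      = 1 - Ex π (fun ω : Fin m → Fin n => bad a ω) := by
  have h := sum_goodSet (π := π) (a := a) (m := m) (fun _ => 1)
  simp only [mul_one] at h
  rw [eventProb, h, Ex_sub, Ex_one hs]

/-- Bias and variance of the whitened estimator, conditioned on the good event. -/
lemma cond_core (hπ : ∀ i, 0 ≤ π i) (hs : ∑ i, π i = 1) (hs0 : 0 ≤ s) (hs1 : s ≤ 1)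
    (hϱ : 0 ≤ ϱ) (hκ : 0 ≤ κ)
    (hP2 : Ex π (fun ω : Fin m → Fin n => bad a ω) ≤ 1 / 2)
    (hP : Ex π (fun ω : Fin m → Fin n => bad a ω) ≤ (30 * s ^ 2) ^ 2)
    (hg0 : ∀ x, Ex π (fun ω : Fin m → Fin n => score a ρ ω ⬝ᵥ x) = 0)
    (hg : Ex π (fun ω : Fin m → Fin n => score a ρ ω ⬝ᵥ score a ρ ω) ≤ (s * ϱ) ^ 2)
    (hgb : Ex π (fun ω : Fin m → Fin n => bad a ω * (score a ρ ω ⬝ᵥ score a ρ ω))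
      ≤ 9600 * s ^ 4 * ϱ ^ 2)
    (hD : ∀ x, Ex π (fun ω : Fin m → Fin n => dev a ω x ⬝ᵥ dev a ω x) ≤ s ^ 2 * (x ⬝ᵥ x))
    (hDg : Ex π (fun ω : Fin m → Fin n => dev a ω (score a ρ ω) ⬝ᵥ dev a ω (score a ρ ω))
      ≤ (3 * s ^ 2 * ϱ) ^ 2)
    (hfo : ∀ x, |Ex π (fun ω : Fin m → Fin n => dev a ω (score a ρ ω) ⬝ᵥ x)|
      ≤ κ * ϱ * Real.sqrt (x ⬝ᵥ x)) :
    0 < eventProb (samplingP π) (goodSet m a) ∧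
    condExp (samplingP π) (goodSet m a) (sol a ρ) ⬝ᵥ
        condExp (samplingP π) (goodSet m a) (sol a ρ)
      ≤ (2 * (132 * s ^ 3 + κ) * ϱ) ^ 2 ∧
    |condExp (samplingP π) (goodSet m a) (fun ω => sol a ρ ω ⬝ᵥ sol a ρ ω)
      - Ex π (fun ω : Fin m → Fin n => score a ρ ω ⬝ᵥ score a ρ ω)|
      ≤ 21336 * s ^ 3 * ϱ ^ 2 := by
  have hev := eventProb_goodSet (m := m) (a := a) hs
  set P := eventProb (samplingP π) (goodSet m a) with hPdef
  have hPhalf : 1 / 2 ≤ P := by rw [hev]; linarith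
  have hP0 : 0 < P := by linarith
  have hPinv : P⁻¹ ≤ 2 := by
    rw [inv_le_comm₀ hP0 (by norm_num)]; linarith
  have hPinv0 : 0 ≤ P⁻¹ := inv_nonneg.mpr hP0.le
  refine ⟨hP0, ?_, ?_⟩
  · set b := condExp (samplingP π) (goodSet m a) (sol a ρ) with hb
    have hbx : b ⬝ᵥ b = P⁻¹ * Ex π (fun ω : Fin m → Fin n => (1 - bad a ω) * (sol a ρ ω ⬝ᵥ b)) := by
      rw [← sum_goodSet]
      conv_lhs => rw [hb]
      rw [condExp, smul_dotProduct, sum_dotProduct, smul_eq_mul, ← hPdef]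
      simp only [smul_dotProduct, smul_eq_mul]
      rfl
    have h1 := bias_core hπ hs0 hs1 hϱ hP hg0 hg hD hDg hfo b
    set N := Real.sqrt (b ⬝ᵥ b) with hN
    have hN2 : N ^ 2 = b ⬝ᵥ b := Real.sq_sqrt (dot_self_nonneg b)
    have hN0 : 0 ≤ N := Real.sqrt_nonneg _
    set B := (132 * s ^ 3 + κ) * ϱ with hB
    have hB0 : 0 ≤ B := by positivity
    have h2 : N * N ≤ 2 * B * N := by
      have h3 := mul_le_mul_of_nonneg_left ((le_abs_self _).trans h1) hPinv0
      rw [← hbx] at h3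
      have h4 := mul_le_mul_of_nonneg_right hPinv (mul_nonneg hB0 hN0)
      nlinarith
    have h5 : N ≤ 2 * B := by
      rcases hN0.eq_or_lt with h0 | h0
      · rw [← h0]; positivity
      · exact le_of_mul_le_mul_right h2 h0
    rw [← hN2]
    calc N ^ 2 ≤ (2 * B) ^ 2 := pow_le_pow_left₀ hN0 h5 2
      _ = _ := by rw [hB]; ring
  · have h1 := var_core hπ hs0 hs1 hϱ hP hg hgb hDg
    rw [← hev] at h1
    have hc : condExp (samplingP π) (goodSet m a) (fun ω => sol a ρ ω ⬝ᵥ sol a ρ ω)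
        = P⁻¹ * Ex π (fun ω : Fin m → Fin n => (1 - bad a ω) * (sol a ρ ω ⬝ᵥ sol a ρ ω)) := by
      rw [← sum_goodSet, condExp, smul_eq_mul, ← hPdef]
      simp only [smul_eq_mul]
    rw [hc]
    set E1 := Ex π (fun ω : Fin m → Fin n => (1 - bad a ω) * (sol a ρ ω ⬝ᵥ sol a ρ ω))
    set E2 := Ex π (fun ω : Fin m → Fin n => score a ρ ω ⬝ᵥ score a ρ ω)
    have h2 : P⁻¹ * E1 - E2 = P⁻¹ * (E1 - P * E2) := by
      rw [mul_sub, inv_mul_cancel_left₀ hP0.ne']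
    rw [h2, abs_mul, abs_of_nonneg hPinv0]
    calc P⁻¹ * |E1 - P * E2| ≤ 2 * (10668 * s ^ 3 * ϱ ^ 2) :=
          mul_le_mul hPinv h1 (abs_nonneg _) (by norm_num)
      _ = _ := by ring

end Core

/-! ### The whitened problem -/

section Whitened

variable {n m p : ℕ} {π : Fin n → ℝ} {a : Fin n → Fin p → ℝ} {ρ : Fin n → ℝ} {L R K δ : ℝ}

/-- The sample-size condition makes the failure probability smaller than `δ` and also
polynomially small in `L / m`. -/
lemma tail_arith (hp : 1 ≤ p) (hL1 : 1 ≤ L) (hδ0 : 0 < δ) (hδ : δ ≤ 1 / 2)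
    (hmδ : 20 * L * Real.log (p / δ) ≤ m) :
    L ≤ m ∧ p * Real.exp (-(L / m)⁻¹ / 10) ≤ δ ∧
      p * Real.exp (-(L / m)⁻¹ / 10) ≤ 400 * (L / m) ^ 2 := by
  have hp1 : (1 : ℝ) ≤ p := by exact_mod_cast hp
  have hp0 : (0 : ℝ) < p := by linarith
  have hpδ : 2 ≤ (p : ℝ) / δ := by
    rw [le_div_iff₀ hδ0]; linarith
  have hlog : 1 / 2 ≤ Real.log (p / δ) := by
    have h1 := Real.log_le_log (by norm_num) hpδ
    linarith [Real.log_two_gt_d9]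
  have hLm : L ≤ m := by
    have := mul_le_mul_of_nonneg_left hlog (show (0 : ℝ) ≤ 20 * L by linarith)
    linarith
  have hmR : (0 : ℝ) < m := by linarith
  have hL0 : 0 < L := by linarith
  refine ⟨hLm, ?_⟩
  set q := L / m with hq
  have hq0 : 0 < q := div_pos hL0 hmR
  set t := q⁻¹ with ht
  have ht0 : 0 < t := inv_pos.mpr hq0
  have htL : 20 * Real.log (p / δ) ≤ t := by
    rw [ht, hq, inv_div, le_div_iff₀ hL0]
    linarith
  have h1 : p * Real.exp (-t / 20) ≤ δ := by
    have h2 : Real.exp (-t / 20) ≤ Real.exp (-Real.log (p / δ)) :=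
      Real.exp_le_exp.mpr (by linarith)
    rw [Real.exp_neg, Real.exp_log (by positivity), inv_div] at h2
    have h3 := mul_le_mul_of_nonneg_left h2 hp0.le
    rwa [mul_div_cancel₀ _ hp0.ne'] at h3
  have h2 : Real.exp (-t / 20) ≤ 800 * q ^ 2 := by
    have h3 := Real.quadratic_le_exp_of_nonneg (show 0 ≤ t / 20 by positivity)
    have h4 : t ^ 2 / 800 ≤ Real.exp (t / 20) := by
      have : 0 ≤ t / 20 := by positivity
      nlinarith
    rw [neg_div, Real.exp_neg, inv_le_comm₀ (Real.exp_pos _) (by positivity)]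
    refine le_trans (le_of_eq ?_) h4
    rw [ht]
    field_simp
  have h3 : Real.exp (-t / 20) ≤ 1 := Real.exp_le_one_iff.mpr (by linarith)
  have h4 : p * Real.exp (-t / 10) = p * Real.exp (-t / 20) * Real.exp (-t / 20) := by
    rw [mul_assoc, ← Real.exp_add]
    congr 2
    ring
  have h5 := Real.exp_pos (-t / 20)
  rw [h4]
  constructor
  · calc _ ≤ δ * 1 := mul_le_mul h1 h3 h5.le hδ0.le
      _ = δ := mul_one δ
  · calc _ ≤ 1 / 2 * (800 * q ^ 2) := mul_le_mul (h1.trans hδ) h2 h5.le (by norm_num)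
      _ = _ := by ring

theorem whitened (hπ : ∀ i, 0 ≤ π i) (hs : ∑ i, π i = 1)
    (hiso : ∀ x y, ∑ i, π i * ((a i ⬝ᵥ x) * (a i ⬝ᵥ y)) = x ⬝ᵥ y)
    (hmean : ∀ x, ∑ i, π i * (ρ i * (a i ⬝ᵥ x)) = 0) (hL : ∀ i, a i ⬝ᵥ a i ≤ L) (hL1 : 1 ≤ L)
    (hR : ∑ i, π i * ρ i ^ 2 ≤ R) (hK0 : 0 ≤ K)
    (hK : ∀ i, π i ≠ 0 → |a i ⬝ᵥ a i - p| ≤ K) (hp : 1 ≤ p) (hδ0 : 0 < δ) (hδ : δ ≤ 1 / 2)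
    (hmδ : 20 * L * Real.log (p / δ) ≤ m) :
    0 < m ∧ 0 < eventProb (samplingP π) (goodSet m a) ∧
    1 - δ ≤ eventProb (samplingP π) (goodSet m a) ∧
    condExp (samplingP π) (goodSet m a) (sol a ρ) ⬝ᵥ
        condExp (samplingP π) (goodSet m a) (sol a ρ)
      ≤ (2 * (132 * Real.sqrt (L / m) ^ 3 + K / m)) ^ 2 * R ∧
    |condExp (samplingP π) (goodSet m a) (fun ω => sol a ρ ω ⬝ᵥ sol a ρ ω)
      - (m : ℝ)⁻¹ * ∑ i, π i * (ρ i ^ 2 * (a i ⬝ᵥ a i))|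
      ≤ 21336 * Real.sqrt (L / m) ^ 3 * R := by
  obtain ⟨hLm, hη1, hη2⟩ := tail_arith hp hL1 hδ0 hδ hmδ
  have hL0 : 0 < L := by linarith
  have hmR : (0 : ℝ) < m := by linarith
  have hm : 0 < m := Nat.cast_pos.mp hmR
  have hR0 : 0 ≤ R := le_trans (Finset.sum_nonneg fun i _ => mul_nonneg (hπ i) (sq_nonneg _)) hR
  have hiso2 : ∀ x, ∑ i, π i * (a i ⬝ᵥ x) ^ 2 = x ⬝ᵥ x := fun x => by
    simp only [sq]; exact hiso x x
  set s := Real.sqrt (L / m) with hsdef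
  have hq0 : 0 < L / m := div_pos hL0 hmR
  have hs2 : s ^ 2 = L / m := Real.sq_sqrt hq0.le
  have hs0 : 0 ≤ s := Real.sqrt_nonneg _
  have hs1 : s ≤ 1 := Real.sqrt_le_one.mpr ((div_le_one hmR).mpr hLm)
  set ϱ := Real.sqrt R with hϱdef
  have hϱ2 : ϱ ^ 2 = R := Real.sq_sqrt hR0
  have hϱ0 : 0 ≤ ϱ := Real.sqrt_nonneg _
  have hbad := Ex_bad_le (m := m) hπ hs hiso2 hL hL0 hm
  have hs4 : s ^ 4 = (L / m) ^ 2 := by rw [← hs2]; ring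
  have hP : Ex π (fun ω : Fin m → Fin n => bad a ω) ≤ (30 * s ^ 2) ^ 2 := by
    refine (hbad.trans hη2).trans ?_
    rw [← hs2]
    nlinarith [sq_nonneg (s ^ 2)]
  have hg0 : ∀ x, Ex π (fun ω : Fin m → Fin n => score a ρ ω ⬝ᵥ x) = 0 := by
    intro x
    simp only [score_dot, Ex_const_mul, Ex_sum]
    have h1 : ∀ k : Fin m, Ex π (fun ω : Fin m → Fin n => ρ (ω k) * (a (ω k) ⬝ᵥ x)) = 0 :=
      fun k => (Ex_coord hs k (fun i => ρ i * (a i ⬝ᵥ x))).trans (hmean x)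
    simp only [h1, Finset.sum_const_zero, mul_zero]
  have hg : Ex π (fun ω : Fin m → Fin n => score a ρ ω ⬝ᵥ score a ρ ω) ≤ (s * ϱ) ^ 2 := by
    rw [mul_pow, hs2, hϱ2]
    exact Ex_score_sq_le hπ hs hm hmean hL hL0.le hR
  have hgb : Ex π (fun ω : Fin m → Fin n => bad a ω * (score a ρ ω ⬝ᵥ score a ρ ω))
      ≤ 9600 * s ^ 4 * ϱ ^ 2 := by
    refine (Ex_bad_score_sq_le hπ hs hiso2 hL hL0 hm hLm hR).trans ?_
    rw [hϱ2, hs4]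
    refine mul_le_mul_of_nonneg_right ?_ hR0
    nlinarith [sq_nonneg (L / m)]
  have hD : ∀ x, Ex π (fun ω : Fin m → Fin n => dev a ω x ⬝ᵥ dev a ω x)
      ≤ s ^ 2 * (x ⬝ᵥ x) := fun x => by
    rw [hs2]; exact Ex_dev_sq_le hπ hs hm hiso hL x
  have hDg : Ex π (fun ω : Fin m → Fin n => dev a ω (score a ρ ω) ⬝ᵥ dev a ω (score a ρ ω))
      ≤ (3 * s ^ 2 * ϱ) ^ 2 := by
    refine (Ex_dev_score_sq_le hπ hs hm hiso hmean hL hL1 hLm hR).trans ?_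
    rw [mul_pow, hs2, hϱ2]
    refine mul_le_mul_of_nonneg_right ?_ hR0
    nlinarith [sq_nonneg (L / m)]
  have hfo : ∀ x, |Ex π (fun ω : Fin m → Fin n => dev a ω (score a ρ ω) ⬝ᵥ x)|
      ≤ K / m * ϱ * Real.sqrt (x ⬝ᵥ x) := by
    intro x
    rw [Ex_dev_score_dot hs hm hiso, abs_mul, abs_of_nonneg (inv_nonneg.mpr hmR.le)]
    have h1 := Real.abs_le_sqrt (first_order_le hπ hiso hmean hR hK x)
    rw [Real.sqrt_mul (by positivity), Real.sqrt_mul (by positivity), Real.sqrt_sq hK0] at h1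
    have h2 := mul_le_mul_of_nonneg_left h1 (inv_nonneg.mpr hmR.le)
    refine h2.trans (le_of_eq ?_)
    ring
  obtain ⟨h1, h2, h3⟩ := cond_core hπ hs hs0 hs1 hϱ0 (div_nonneg hK0 hmR.le)
    (hbad.trans (hη1.trans hδ)) hP hg0 hg hgb hD hDg hfo
  refine ⟨hm, h1, ?_, ?_, ?_⟩
  · rw [eventProb_goodSet hs]
    linarith
  · rwa [mul_pow, hϱ2] at h2
  · rwa [Ex_score_sq hs hm hmean, hϱ2] at h3

end Whitened

/-! ### Reduction to the whitened problem -/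

section Reduction

variable {n m p : ℕ} {X : Matrix (Fin n) (Fin p) ℝ} {T : Matrix (Fin p) (Fin p) ℝ}
  {y : Fin n → ℝ} {π : Fin n → ℝ}

open scoped MatrixOrder in
lemma exists_whitening (X : Matrix (Fin n) (Fin p) ℝ) :
    ∃ T : Matrix (Fin p) (Fin p) ℝ, (Xᵀ * X)⁻¹ = T * Tᵀ := by
  have h0 : (Xᵀ * X).PosSemidef := by
    have := Matrix.posSemidef_conjTranspose_mul_self X
    rwa [conjTranspose_eq_transpose_of_trivial] at this
  obtain ⟨B, hB⟩ := CStarAlgebra.nonneg_iff_eq_star_mul_self.mp h0.inv.nonneg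
  refine ⟨Bᵀ, ?_⟩
  rw [hB, star_eq_conjTranspose, conjTranspose_eq_transpose_of_trivial, transpose_transpose]

/-- The whitened sampling rows `Tᵀ xᵢ / √πᵢ`. When `πᵢ = 0` this is `0`. -/
def wrow (X : Matrix (Fin n) (Fin p) ℝ) (T : Matrix (Fin p) (Fin p) ℝ) (π : Fin n → ℝ)
    (i : Fin n) : Fin p → ℝ :=
  (Real.sqrt (π i))⁻¹ • (Tᵀ *ᵥ X i)

/-- The rescaled residuals `rᵢ / √πᵢ`. When `πᵢ = 0` this is `0`. -/
def wres (X : Matrix (Fin n) (Fin p) ℝ) (y : Fin n → ℝ) (π : Fin n → ℝ) (i : Fin n) : ℝ :=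
  (Real.sqrt (π i))⁻¹ * olsResid X y i

lemma whiten_iso (hX : IsUnit (Xᵀ * X).det) (hT : (Xᵀ * X)⁻¹ = T * Tᵀ) :
    Tᵀ * (Xᵀ * X) * T = 1 := by
  rw [mul_eq_one_comm, ← mul_assoc, ← hT, Matrix.nonsing_inv_mul _ hX]

lemma lev_eq (hT : (Xᵀ * X)⁻¹ = T * Tᵀ) (i : Fin n) :
    lev X i = (Tᵀ *ᵥ X i) ⬝ᵥ (Tᵀ *ᵥ X i) := by
  rw [lev, hT, ← mulVec_mulVec, dotProduct_mulVec, ← mulVec_transpose]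

lemma lev_nonneg (hT : (Xᵀ * X)⁻¹ = T * Tᵀ) (i : Fin n) : 0 ≤ lev X i := by
  rw [lev_eq hT]; exact dot_self_nonneg _

lemma wrow_self (hT : (Xᵀ * X)⁻¹ = T * Tᵀ) (hπ : ∀ i, 0 ≤ π i) (i : Fin n) :
    wrow X T π i ⬝ᵥ wrow X T π i = lev X i / π i := by
  rw [wrow, smul_dotProduct, dotProduct_smul, ← lev_eq hT, smul_eq_mul, smul_eq_mul, ← mul_assoc,
    ← mul_inv, Real.mul_self_sqrt (hπ i)]
  ring

lemma wrow_dot (i : Fin n) (x : Fin p → ℝ) :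
    wrow X T π i ⬝ᵥ x = (Real.sqrt (π i))⁻¹ * (X i ⬝ᵥ (T *ᵥ x)) := by
  rw [wrow, smul_dotProduct, smul_eq_mul, mulVec_transpose, dotProduct_mulVec]

lemma row_dot_eq_zero (hT : (Xᵀ * X)⁻¹ = T * Tᵀ) {i : Fin n} (h : lev X i = 0)
    (x : Fin p → ℝ) : X i ⬝ᵥ (T *ᵥ x) = 0 := by
  rw [lev_eq hT, dotProduct_self_eq_zero] at h
  rw [dotProduct_mulVec, ← mulVec_transpose, h, zero_dotProduct]

lemma wrow_iso (hX : IsUnit (Xᵀ * X).det) (hT : (Xᵀ * X)⁻¹ = T * Tᵀ) (hπ : ∀ i, 0 ≤ π i)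
    (h0 : ∀ i, π i = 0 → lev X i = 0) (x z : Fin p → ℝ) :
    ∑ i, π i * ((wrow X T π i ⬝ᵥ x) * (wrow X T π i ⬝ᵥ z)) = x ⬝ᵥ z := by
  have h1 : ∀ i, π i * ((wrow X T π i ⬝ᵥ x) * (wrow X T π i ⬝ᵥ z))
      = (X *ᵥ (T *ᵥ x)) i * (X *ᵥ (T *ᵥ z)) i := by
    intro i
    change _ = (X i ⬝ᵥ (T *ᵥ x)) * (X i ⬝ᵥ (T *ᵥ z))
    rw [wrow_dot, wrow_dot]
    by_cases hi : π i = 0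
    · rw [row_dot_eq_zero hT (h0 i hi) x]; ring
    · have h2 := Real.sq_sqrt (hπ i)
      have h3 : Real.sqrt (π i) ≠ 0 := (Real.sqrt_ne_zero (hπ i)).mpr hi
      field_simp
      rw [h2]
  calc _ = (X *ᵥ (T *ᵥ x)) ⬝ᵥ (X *ᵥ (T *ᵥ z)) := Finset.sum_congr rfl fun i _ => h1 i
    _ = x ⬝ᵥ ((Tᵀ * (Xᵀ * X) * T) *ᵥ z) := by
      simp only [← mulVec_mulVec, dotProduct_mulVec, vecMul_transpose]
    _ = x ⬝ᵥ z := by rw [whiten_iso hX hT, one_mulVec]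

lemma resid_orth (hX : IsUnit (Xᵀ * X).det) (β : Fin p → ℝ) :
    olsResid X y ⬝ᵥ (X *ᵥ β) = 0 := by
  have h : Xᵀ *ᵥ olsResid X y = 0 := by
    rw [olsResid, olsSol, mulVec_sub, mulVec_mulVec, mulVec_mulVec,
      Matrix.mul_nonsing_inv _ hX, one_mulVec, sub_self]
  rw [dotProduct_mulVec, ← mulVec_transpose, h, zero_dotProduct]

lemma wres_mean (hX : IsUnit (Xᵀ * X).det) (hT : (Xᵀ * X)⁻¹ = T * Tᵀ) (hπ : ∀ i, 0 ≤ π i)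
    (h0 : ∀ i, π i = 0 → lev X i = 0) (x : Fin p → ℝ) :
    ∑ i, π i * (wres X y π i * (wrow X T π i ⬝ᵥ x)) = 0 := by
  have h1 : ∀ i, π i * (wres X y π i * (wrow X T π i ⬝ᵥ x))
      = olsResid X y i * (X *ᵥ (T *ᵥ x)) i := by
    intro i
    change _ = olsResid X y i * (X i ⬝ᵥ (T *ᵥ x))
    rw [wrow_dot, wres]
    by_cases hi : π i = 0
    · rw [row_dot_eq_zero hT (h0 i hi) x]; ring
    · have h2 := Real.sq_sqrt (hπ i)
      have h3 : Real.sqrt (π i) ≠ 0 := (Real.sqrt_ne_zero (hπ i)).mpr hi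
      field_simp
      rw [h2]
  calc _ = olsResid X y ⬝ᵥ (X *ᵥ (T *ᵥ x)) := Finset.sum_congr rfl fun i _ => h1 i
    _ = 0 := resid_orth hX _

lemma mul_wres_sq (hπ : ∀ i, 0 ≤ π i) {i : Fin n} (hi : π i ≠ 0) :
    π i * wres X y π i ^ 2 = olsResid X y i ^ 2 := by
  rw [wres, mul_pow, inv_pow, Real.sq_sqrt (hπ i), mul_inv_cancel_left₀ hi]

lemma wres_sq_le (hπ : ∀ i, 0 ≤ π i) :
    ∑ i, π i * wres X y π i ^ 2 ≤ olsResid X y ⬝ᵥ olsResid X y := by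
  refine Finset.sum_le_sum fun i _ => ?_
  by_cases hi : π i = 0
  · rw [hi, zero_mul]; exact mul_self_nonneg _
  · rw [mul_wres_sq hπ hi, sq]

lemma delta_eq (hT : (Xᵀ * X)⁻¹ = T * Tᵀ) (hπ : ∀ i, 0 ≤ π i) :
    deltaOLS X y π m = (m : ℝ)⁻¹ *
      ∑ i, π i * (wres X y π i ^ 2 * (wrow X T π i ⬝ᵥ wrow X T π i)) := by
  rw [deltaOLS, dotProduct, Finset.mul_sum]
  refine Finset.sum_congr rfl fun i _ => ?_
  rw [mulVec_diagonal, wrow_self hT hπ]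
  by_cases hi : π i = 0
  · simp [hi]
  · rw [← mul_assoc (π i), mul_wres_sq hπ hi, div_eq_mul_inv, div_eq_mul_inv, mul_inv]
    ring

lemma loss_eq (hX : IsUnit (Xᵀ * X).det) (hT : (Xᵀ * X)⁻¹ = T * Tᵀ) (z : Fin p → ℝ) :
    lossL X y (olsSol X y + T *ᵥ z) = olsResid X y ⬝ᵥ olsResid X y + z ⬝ᵥ z := by
  have h1 : y - X *ᵥ (olsSol X y + T *ᵥ z) = olsResid X y - X *ᵥ (T *ᵥ z) := by
    rw [olsResid, mulVec_add]; abel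
  have h2 : (X *ᵥ (T *ᵥ z)) ⬝ᵥ (X *ᵥ (T *ᵥ z)) = z ⬝ᵥ z := by
    calc _ = z ⬝ᵥ ((Tᵀ * (Xᵀ * X) * T) *ᵥ z) := by
          simp only [← mulVec_mulVec, dotProduct_mulVec, vecMul_transpose]
      _ = z ⬝ᵥ z := by rw [whiten_iso hX hT, one_mulVec]
  have h3 := resid_orth (y := y) hX (T *ᵥ z)
  rw [lossL, h1, sub_dotProduct, dotProduct_sub, dotProduct_sub, h3, h2,
    dotProduct_comm (X *ᵥ (T *ᵥ z)) (olsResid X y), h3]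
  ring

lemma loss_ols : lossL X y (olsSol X y) = olsResid X y ⬝ᵥ olsResid X y := rfl

lemma samplingS_mulVec (ω : Fin m → Fin n) (v : Fin n → ℝ) (s : Fin m) :
    (samplingS π ω *ᵥ v) s = (Real.sqrt m)⁻¹ * ((Real.sqrt (π (ω s)))⁻¹ * v (ω s)) := by
  simp only [samplingS, mulVec, dotProduct, of_apply, ite_mul, zero_mul, Finset.sum_ite_eq',
    Finset.mem_univ, if_true]
  rw [Real.sqrt_mul (Nat.cast_nonneg m), one_div, mul_inv, mul_assoc]

/-- Row `s` of the whitened sampled design is `a (ω s) / √m`. -/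
lemma sampled_row (ω : Fin m → Fin n) (x : Fin p → ℝ) (s : Fin m) :
    ((samplingS π ω * X) *ᵥ (T *ᵥ x)) s = (Real.sqrt m)⁻¹ * (wrow X T π (ω s) ⬝ᵥ x) := by
  rw [← mulVec_mulVec, samplingS_mulVec, wrow_dot]
  rfl

lemma sampled_resid (ω : Fin m → Fin n) (s : Fin m) :
    (samplingS π ω *ᵥ olsResid X y) s = (Real.sqrt m)⁻¹ * wres X y π (ω s) := by
  rw [samplingS_mulVec, wres]

/-- Testing `Tᵀ (S X)ᵀ w` against `x`. -/
lemma sampled_transpose_dot (ω : Fin m → Fin n) (w : Fin m → ℝ) (x : Fin p → ℝ) :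
    (Tᵀ *ᵥ ((samplingS π ω * X)ᵀ *ᵥ w)) ⬝ᵥ x
      = ∑ s, w s * ((Real.sqrt m)⁻¹ * (wrow X T π (ω s) ⬝ᵥ x)) := by
  rw [mulVec_transpose, ← dotProduct_mulVec, mulVec_transpose, ← dotProduct_mulVec]
  exact Finset.sum_congr rfl fun s _ => by rw [sampled_row]

lemma sampled_gram (ω : Fin m → Fin n) :
    Tᵀ * ((samplingS π ω * X)ᵀ * (samplingS π ω * X)) * T = gram (wrow X T π) ω := by
  refine Matrix.ext_of_mulVec_single fun i => ?_
  generalize (Pi.single i 1 : Fin p → ℝ) = x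
  refine dotProduct_eq _ _ fun z => ?_
  rw [← mulVec_mulVec, ← mulVec_mulVec, ← mulVec_mulVec, sampled_transpose_dot, gramOn_mulVec,
    smul_dotProduct, sum_dotProduct, smul_eq_mul, Finset.mul_sum]
  refine Finset.sum_congr rfl fun s _ => ?_
  have h : (m : ℝ)⁻¹ = (Real.sqrt m)⁻¹ * (Real.sqrt m)⁻¹ := by
    rw [← mul_inv, Real.mul_self_sqrt (Nat.cast_nonneg m)]
  rw [sampled_row, smul_dotProduct, smul_eq_mul, h]
  ring

lemma sampled_score (ω : Fin m → Fin n) :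
    Tᵀ *ᵥ ((samplingS π ω * X)ᵀ *ᵥ (samplingS π ω *ᵥ olsResid X y))
      = score (wrow X T π) (wres X y π) ω := by
  refine dotProduct_eq _ _ fun z => ?_
  rw [sampled_transpose_dot, score, smul_dotProduct, sum_dotProduct, smul_eq_mul, Finset.mul_sum]
  refine Finset.sum_congr rfl fun s _ => ?_
  have h : (m : ℝ)⁻¹ = (Real.sqrt m)⁻¹ * (Real.sqrt m)⁻¹ := by
    rw [← mul_inv, Real.mul_self_sqrt (Nat.cast_nonneg m)]
  rw [sampled_resid, smul_dotProduct, smul_eq_mul, h]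
  ring

lemma sampled_isUnit {ω : Fin m → Fin n} (h : ω ∈ goodSet m (wrow X T π)) :
    IsUnit ((samplingS π ω * X)ᵀ * (samplingS π ω * X)).det := by
  have h1 := good_isUnit h
  rw [← sampled_gram, det_mul, det_mul] at h1
  exact isUnit_of_mul_isUnit_right (isUnit_of_mul_isUnit_left h1)

lemma betaTilde_eq {ω : Fin m → Fin n} (h : ω ∈ goodSet m (wrow X T π)) :
    betaTilde X y π ω = olsSol X y + T *ᵥ sol (wrow X T π) (wres X y π) ω := by
  set G := (samplingS π ω * X)ᵀ * (samplingS π ω * X) with hG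
  have hGu : IsUnit G.det := sampled_isUnit h
  have hW := good_isUnit h
  have hGinv : G⁻¹ = T * (gram (wrow X T π) ω)⁻¹ * Tᵀ := by
    refine Matrix.inv_eq_right_inv ?_
    have h1 : Tᵀ * (G * (T * (gram (wrow X T π) ω)⁻¹)) = 1 := by
      rw [← mul_assoc, ← mul_assoc, hG, sampled_gram, Matrix.mul_nonsing_inv _ hW]
    rw [← mul_assoc]
    exact mul_eq_one_comm.mp h1
  have hy : samplingS π ω *ᵥ y
      = (samplingS π ω * X) *ᵥ olsSol X y + samplingS π ω *ᵥ olsResid X y := by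
    rw [olsResid, mulVec_sub, mulVec_mulVec]; abel
  have hβ : G⁻¹ *ᵥ ((samplingS π ω * X)ᵀ *ᵥ ((samplingS π ω * X) *ᵥ olsSol X y)) = olsSol X y := by
    rw [mulVec_mulVec _ (samplingS π ω * X)ᵀ, ← hG, mulVec_mulVec, Matrix.nonsing_inv_mul _ hGu,
      one_mulVec]
  rw [betaTilde, hy, mulVec_add, mulVec_add, ← hG, hβ, hGinv, sol, ← sampled_score,
    ← mulVec_mulVec, ← mulVec_mulVec]

lemma condExp_congr {Ω V : Type*} [AddCommMonoid V] [Module ℝ V] {P : Ω → ℝ} {ζ : Finset Ω}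
    {f g : Ω → V} (h : ∀ ω ∈ ζ, f ω = g ω) : condExp P ζ f = condExp P ζ g := by
  rw [condExp, condExp, Finset.sum_congr rfl fun ω hω => by rw [h ω hω]]

lemma condExp_affine {Ω : Type*} {k l : ℕ} {P : Ω → ℝ} {ζ : Finset Ω} (hP : eventProb P ζ ≠ 0)
    (β : Fin k → ℝ) (T : Matrix (Fin k) (Fin l) ℝ) (f : Ω → Fin l → ℝ) :
    condExp P ζ (fun ω => β + T *ᵥ f ω) = β + T *ᵥ condExp P ζ f := by
  simp only [condExp, smul_add, Finset.sum_add_distrib, ← Finset.sum_smul, mulVec_smul]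
  rw [← eventProb, smul_smul, inv_mul_cancel₀ hP, one_smul]
  congr 2
  rw [← mulVecLin_apply, map_sum]
  simp only [map_smul, mulVecLin_apply]

lemma condExp_const_add {Ω : Type*} {P : Ω → ℝ} {ζ : Finset Ω} (hP : eventProb P ζ ≠ 0)
    (c : ℝ) (f : Ω → ℝ) : condExp P ζ (fun ω => c + f ω) = c + condExp P ζ f := by
  simp only [condExp, smul_add, Finset.sum_add_distrib, ← Finset.sum_smul]
  rw [← eventProb, smul_smul, inv_mul_cancel₀ hP, one_smul]

end Reduction


/-! ### Arithmetic of the parameters -/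

lemma sqrt_cube_ratio {θ : ℝ} (p m : ℕ) (hθ : 0 ≤ θ) :
    Real.sqrt (θ ^ 3 * p ^ 3 / m ^ 3) = Real.sqrt (p * θ / m) ^ 3 := by
  have h0 : 0 ≤ p * θ / (m : ℝ) := by positivity
  have h : θ ^ 3 * p ^ 3 / (m : ℝ) ^ 3 = (Real.sqrt (p * θ / m) ^ 3) ^ 2 := by
    rw [← pow_mul, mul_comm 3 2, pow_mul, Real.sq_sqrt h0, div_pow, mul_pow, mul_comm (θ ^ 3)]
  rw [h, Real.sqrt_sq (by positivity)]

lemma one_le_log_div_loglog {n : ℕ} (hn : 3 ≤ n) :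
    1 ≤ Real.log n / Real.log (Real.log n) := by
  have hn' : (3 : ℝ) ≤ n := by exact_mod_cast hn
  have h1 : 1 < Real.log n := by
    rw [Real.lt_log_iff_exp_lt (by linarith)]
    linarith [Real.exp_one_lt_d9]
  rw [one_le_div (Real.log_pos h1)]
  linarith [Real.log_le_sub_one_of_pos (by linarith : 0 < Real.log n)]

lemma rpow_le_half {n : ℕ} {α : ℝ} (hn : 3 ≤ n) (hα : 0 < α) :
    (n : ℝ) ^ (-(3 + α)) ≤ 1 / 2 := by
  have hn' : (3 : ℝ) ≤ n := by exact_mod_cast hn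
  calc (n : ℝ) ^ (-(3 + α)) ≤ (n : ℝ) ^ (-1 : ℝ) :=
        Real.rpow_le_rpow_of_exponent_le (by linarith) (by linarith)
    _ = (n : ℝ)⁻¹ := Real.rpow_neg_one _
    _ ≤ 1 / 2 := by
        rw [one_div]
        exact inv_anti₀ (by norm_num) (by linarith)

/-- Approximate leverage sampling forces `‖a‖² = ℓ / π` to lie within `p θ₊ ε_θ` of `p`. -/
lemma lev_div_bounds {l π p θm θp : ℝ} (hp : 0 < p) (hm : 1 / 2 ≤ θm) (hm1 : θm ≤ 1) (hθ : 1 ≤ θp)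
    (hπ : 0 < π) (h1 : l / (p * θp) ≤ π) (h2 : π ≤ l / (p * θm)) :
    l / π ≤ p * θp ∧ |l / π - p| ≤ p * θp * max (θm⁻¹ - 1) (1 - θp⁻¹) := by
  have hup : l / π ≤ p * θp := by
    rw [div_le_iff₀ (by positivity)] at h1
    rw [div_le_iff₀ hπ]; linarith
  have hlo : p * θm ≤ l / π := by
    rw [le_div_iff₀ (by positivity)] at h2
    rw [le_div_iff₀ hπ]; linarith
  have hpθ : 0 < p * θp := by positivity
  refine ⟨hup, abs_le.mpr ⟨?_, ?_⟩⟩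
  · have h3 : θm⁻¹ - 1 ≤ max (θm⁻¹ - 1) (1 - θp⁻¹) := le_max_left _ _
    have h4 : 1 - θm ≤ θm⁻¹ - 1 := by
      have h5 : θm * θm⁻¹ = 1 := mul_inv_cancel₀ (by linarith)
      have h6 : 0 < θm⁻¹ := inv_pos.mpr (by linarith)
      nlinarith [sq_nonneg (1 - θm), mul_nonneg h6.le (sq_nonneg (1 - θm))]
    have h7 : p * (1 - θm) ≤ p * θp * max (θm⁻¹ - 1) (1 - θp⁻¹) :=
      mul_le_mul (by nlinarith) (h4.trans h3) (by linarith) hpθ.le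
    linarith
  · have h3 : 1 - θp⁻¹ ≤ max (θm⁻¹ - 1) (1 - θp⁻¹) := le_max_right _ _
    have h4 := mul_le_mul_of_nonneg_left h3 hpθ.le
    have h5 : p * θp * (1 - θp⁻¹) = p * θp - p := by
      rw [mul_sub, mul_one, mul_assoc, mul_inv_cancel₀ (by linarith), mul_one]
    linarith

/-! ### Bias and variance of subsampled least squares -/

/-- **Bias–variance of standard subsampled OLS under approximate leverage score
sampling** (Corollary 4.5): there are absolute constants `C, C' > 0` such that,
for `θ₋ ∈ [1/2,1]`, `θ₊ ≥ 1`, a sampling distribution with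
`ℓ_i(X)/(p θ₊) ≤ π_i ≤ ℓ_i(X)/(p θ₋)`, the row-norm condition with exponent
`α`, `0 < δ ≤ n^{−(3+α)}` and `m ≥ C θ₊ p log(p/δ)`, there is an event `ζ` of
probability at least `1 − δ` on which the sketched Gram matrices are invertible
and `Bias_ζ(β̃) ≤ ε² ‖r‖²` and `|Var_ζ(β̃) − Δ(X)| ≤ ε ‖r‖²`, where
`ε = C' ((log n/log log n) √(θ₊³ p³/m³) + ε_θ θ₊ p/m)` and
`ε_θ = max{θ₋⁻¹ − 1, 1 − θ₊⁻¹}`. -/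
theorem subsampled_ols_leverage_bias_variance :
    ∃ C C' : ℝ, 0 < C ∧ 0 < C' ∧
      ∀ (n p m : ℕ) (X : Matrix (Fin n) (Fin p) ℝ) (y : Fin n → ℝ)
        (π : Fin n → ℝ) (α θmin θplus : ℝ),
        1 ≤ p → p ≤ n → 3 ≤ n →
        IsUnit (Xᵀ * X).det →
        0 < α →
        (∀ i, X i ≠ 0 → (n : ℝ) ^ (-α) ≤ (X i ⬝ᵥ X i) / frobNorm X ^ 2) →
        1 / 2 ≤ θmin → θmin ≤ 1 → 1 ≤ θplus →
        (∀ i, 0 ≤ π i) → (∑ i, π i = 1) →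
        (∀ i, lev X i / (p * θplus) ≤ π i ∧ π i ≤ lev X i / (p * θmin)) →
        ∀ δ : ℝ, 0 < δ → δ ≤ (n : ℝ) ^ (-(3 + α)) →
        C * θplus * p * Real.log (p / δ) ≤ m →
        ∃ ζ : Finset (Fin m → Fin n),
          1 - δ ≤ eventProb (samplingP π) ζ ∧
          (∀ ω ∈ ζ,
            IsUnit ((samplingS π ω * X)ᵀ * (samplingS π ω * X)).det) ∧
          lossL X y (condExp (samplingP π) ζ (betaTilde X y π)) -
              lossL X y (olsSol X y)
            ≤ (C' * ((Real.log n / Real.log (Real.log n)) *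
                    Real.sqrt (θplus ^ 3 * p ^ 3 / m ^ 3) +
                  max (θmin⁻¹ - 1) (1 - θplus⁻¹) * θplus * p / m)) ^ 2 *
              (olsResid X y ⬝ᵥ olsResid X y) ∧
          |condExp (samplingP π) ζ (fun ω => lossL X y (betaTilde X y π ω)) -
              lossL X y (olsSol X y) - deltaOLS X y π m|
            ≤ (C' * ((Real.log n / Real.log (Real.log n)) *
                    Real.sqrt (θplus ^ 3 * p ^ 3 / m ^ 3) +
                  max (θmin⁻¹ - 1) (1 - θplus⁻¹) * θplus * p / m)) *
              (olsResid X y ⬝ᵥ olsResid X y) := by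
  refine ⟨20, 30000, by norm_num, by norm_num, ?_⟩
  intro n p m X y π α θm θp hp _ hn hX hα _ hθm hθm1 hθp hπ hs hlev δ hδ0 hδ hm
  obtain ⟨T, hT⟩ := exists_whitening X
  have hpR : (0 : ℝ) < p := by exact_mod_cast hp
  have hp1 : (1 : ℝ) ≤ p := by exact_mod_cast hp
  have hθ0 : 0 < θp := by linarith
  have h0 : ∀ i, π i = 0 → lev X i = 0 := fun i hi => by
    have h1 := (hlev i).1
    rw [hi, div_le_iff₀ (by positivity), zero_mul] at h1
    exact le_antisymm h1 (lev_nonneg hT i)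
  have hb : ∀ i, π i ≠ 0 → lev X i / π i ≤ p * θp ∧
      |lev X i / π i - p| ≤ p * θp * max (θm⁻¹ - 1) (1 - θp⁻¹) := fun i hi =>
    lev_div_bounds hpR hθm hθm1 hθp (lt_of_le_of_ne (hπ i) (Ne.symm hi)) (hlev i).1 (hlev i).2
  set εθ := max (θm⁻¹ - 1) (1 - θp⁻¹) with hεθ
  have hεθ0 : 0 ≤ εθ := le_max_of_le_right (sub_nonneg.mpr (inv_le_one_of_one_le₀ hθp))
  set R := olsResid X y ⬝ᵥ olsResid X y with hR
  have hR0 : 0 ≤ R := dot_self_nonneg _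
  obtain ⟨hm0, hP, hPδ, hbias, hvar⟩ := whitened (m := m) (a := wrow X T π) (ρ := wres X y π)
    (L := p * θp) (R := R) (K := p * θp * εθ) hπ hs (wrow_iso hX hT hπ h0)
    (wres_mean hX hT hπ h0)
    (fun i => by
      rw [wrow_self hT hπ]
      by_cases hi : π i = 0
      · rw [hi, div_zero]; positivity
      · exact (hb i hi).1)
    (by nlinarith) (wres_sq_le hπ) (by positivity)
    (fun i hi => by rw [wrow_self hT hπ]; exact (hb i hi).2) hp hδ0
    (hδ.trans (rpow_le_half hn hα)) (by rw [← mul_assoc, mul_right_comm 20]; exact hm)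
  have hlog := one_le_log_div_loglog hn
  have hmR : (0 : ℝ) < m := by exact_mod_cast hm0
  rw [sqrt_cube_ratio p m hθ0.le]
  set s := Real.sqrt (p * θp / m) ^ 3 with hsdef
  have hs0 : 0 ≤ s := by positivity
  have hls : s ≤ Real.log n / Real.log (Real.log n) * s := le_mul_of_one_le_left hs0 hlog
  have hK : p * θp * εθ / m = εθ * θp * p / m := by ring
  have hK0 : 0 ≤ εθ * θp * p / (m : ℝ) := by positivity
  refine ⟨goodSet m (wrow X T π), hPδ, fun ω hω => sampled_isUnit hω, ?_, ?_⟩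
  · rw [condExp_congr fun ω hω => betaTilde_eq hω, condExp_affine hP.ne', loss_eq hX hT, loss_ols,
      add_sub_cancel_left]
    refine hbias.trans (mul_le_mul_of_nonneg_right ?_ hR0)
    rw [hK]
    exact pow_le_pow_left₀ (by positivity) (by linarith) 2
  · rw [condExp_congr (g := fun ω => R + sol (wrow X T π) (wres X y π) ω ⬝ᵥ
        sol (wrow X T π) (wres X y π) ω)
        fun ω hω => by rw [betaTilde_eq hω, loss_eq hX hT],
      condExp_const_add hP.ne', loss_ols, add_sub_cancel_left, delta_eq hT hπ]
    exact hvar.trans (mul_le_mul_of_nonneg_right (by linarith) hR0)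


end
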